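/- Let P be a proper real-rational n×n transfer matrix that is negative imaginary (NI, possibly with a pole at the origin), let C be strictly negative imaginary (SNI), and let Ψ be a real symmetric negative-definite matrix such that the largest eigenvalue of P(∞)Ψ is less than 1. Then the positive feedback interconnection [P,C] is stable if and only if: (a) I − P(∞)C(∞) is nonsingular; (b) the largest eigenvalue of (I − P(∞)C(∞))^{-1}(P(∞)C(0) − I) is negative; and (c) the largest eigenvalue of lim_{s→0} (I − Ψ P(∞))(I − C(s)P(∞))^{-1}(C(s)P(s) − I)(I − Ψ P(s))^{-1} is negative. -/

import Mathlib

open Matrix Polynomial Filter Topology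
open scoped ComplexOrder

noncomputable section

namespace NIControl

/-- Evaluate a real-rational function at a complex point (junk value at poles). -/
def evalC (f : RatFunc ℝ) (s : ℂ) : ℂ :=
  f.eval (algebraMap ℝ ℂ) s

/-- `s` is a pole of the real-rational function `f`
(the reduced denominator vanishes at `s`). -/
def IsPoleAt (f : RatFunc ℝ) (s : ℂ) : Prop :=
  f.denom.eval₂ (algebraMap ℝ ℂ) s = 0

variable {n : ℕ}

/-- Pointwise evaluation of a real-rational transfer matrix at a complex point. -/
def evalM (G : Matrix (Fin n) (Fin n) (RatFunc ℝ)) (s : ℂ) : Matrix (Fin n) (Fin n) ℂ :=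
  Matrix.of fun i j => evalC (G i j) s

/-- Pointwise evaluation of a real-rational transfer matrix at a real point. -/
def evalR (G : Matrix (Fin n) (Fin n) (RatFunc ℝ)) (x : ℝ) : Matrix (Fin n) (Fin n) ℝ :=
  Matrix.of fun i j => (G i j).eval (RingHom.id ℝ) x

/-- Value at `s = ∞` of a proper real-rational function. -/
def atInfinity (f : RatFunc ℝ) : ℝ :=
  if f.num.degree = f.denom.degree then f.num.leadingCoeff / f.denom.leadingCoeff else 0

/-- The instantaneous gain `G(∞)` of a proper real-rational transfer matrix. -/
def evalInf (G : Matrix (Fin n) (Fin n) (RatFunc ℝ)) : Matrix (Fin n) (Fin n) ℝ :=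
  Matrix.of fun i j => atInfinity (G i j)

/-- The matrix `G` has a pole at `s`. -/
def HasPole (G : Matrix (Fin n) (Fin n) (RatFunc ℝ)) (s : ℂ) : Prop :=
  ∃ i j, IsPoleAt (G i j) s

/-- All entries of `G` are proper rational functions. -/
def Proper (G : Matrix (Fin n) (Fin n) (RatFunc ℝ)) : Prop :=
  ∀ i j, (G i j).num.degree ≤ (G i j).denom.degree

/-- All entries of `G` are strictly proper rational functions. -/
def StrictlyProper (G : Matrix (Fin n) (Fin n) (RatFunc ℝ)) : Prop :=
  ∀ i j, (G i j).num.degree < (G i j).denom.degree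

/-- The pole of `G` at the origin (if any) is at most simple. -/
def NoDoubleOriginPole (G : Matrix (Fin n) (Fin n) (RatFunc ℝ)) : Prop :=
  ∀ i j, (G i j).denom.rootMultiplicity 0 ≤ 1

/-- Membership in `RH∞`: proper and no poles in the closed right-half complex plane. -/
def MemRHinf {m : Type*} [Fintype m] (G : Matrix m m (RatFunc ℝ)) : Prop :=
  (∀ i j, (G i j).num.degree ≤ (G i j).denom.degree) ∧
  ∀ s : ℂ, 0 ≤ s.re → ∀ i j, ¬ IsPoleAt (G i j) s

/-- The point `jω` on the imaginary axis. -/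
def jw (ω : ℝ) : ℂ := Complex.I * (ω : ℂ)

/-- The negative-imaginary frequency kernel `j (M − M*)`. -/
def niKer (M : Matrix (Fin n) (Fin n) ℂ) : Matrix (Fin n) (Fin n) ℂ :=
  Complex.I • (M - Mᴴ)

/-- Negative imaginary (NI) real-rational transfer matrix. -/
def IsNI (G : Matrix (Fin n) (Fin n) (RatFunc ℝ)) : Prop :=
  Proper G ∧
  (∀ s : ℂ, 0 < s.re → ¬ HasPole G s) ∧
  (∀ ω : ℝ, 0 < ω → ¬ HasPole G (jw ω) → (niKer (evalM G (jw ω))).PosSemidef) ∧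
  (∀ ω : ℝ, 0 < ω → HasPole G (jw ω) →
    ∃ R : Matrix (Fin n) (Fin n) ℂ, R.PosSemidef ∧
      Tendsto (fun s : ℂ => (s - jw ω) • Complex.I • evalM G s) (𝓝[≠] jw ω) (𝓝 R)) ∧
  (HasPole G 0 →
    (∀ k : ℕ, 3 ≤ k → Tendsto (fun s : ℂ => s ^ k • evalM G s) (𝓝[≠] 0) (𝓝 0)) ∧
    ∃ R : Matrix (Fin n) (Fin n) ℂ, R.PosSemidef ∧
      Tendsto (fun s : ℂ => s ^ 2 • evalM G s) (𝓝[≠] 0) (𝓝 R))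

/-- Strictly negative imaginary (SNI) real-rational transfer matrix. -/
def IsSNI (G : Matrix (Fin n) (Fin n) (RatFunc ℝ)) : Prop :=
  MemRHinf G ∧ ∀ ω : ℝ, 0 < ω → (niKer (evalM G (jw ω))).PosDef

/-- Positive real (passive) real-rational transfer matrix. -/
def IsPositiveReal (G : Matrix (Fin n) (Fin n) (RatFunc ℝ)) : Prop :=
  MemRHinf G ∧ ∀ ω : ℝ, 0 ≤ ω → (evalM G (jw ω) + (evalM G (jw ω))ᴴ).PosSemidef

/-- Output strictly passive real-rational transfer matrix. -/
def IsOSP (G : Matrix (Fin n) (Fin n) (RatFunc ℝ)) : Prop :=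
  MemRHinf G ∧ ∃ ε : ℝ, 0 < ε ∧ ∀ ω : ℝ, 0 ≤ ω →
    (evalM G (jw ω) + (evalM G (jw ω))ᴴ -
      (ε : ℂ) • ((evalM G (jw ω))ᴴ * evalM G (jw ω))).PosSemidef

/-- Stability of the positive feedback interconnection `[P, C]`:
`[I; C] (I − P C)⁻¹ [I, P] ∈ RH∞`. -/
def FeedbackStable (P C : Matrix (Fin n) (Fin n) (RatFunc ℝ)) : Prop :=
  ((1 : Matrix (Fin n) (Fin n) (RatFunc ℝ)) - P * C).det ≠ 0 ∧
  MemRHinf (Matrix.fromBlocks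
    (1 - P * C)⁻¹ ((1 - P * C)⁻¹ * P)
    (C * (1 - P * C)⁻¹) (C * (1 - P * C)⁻¹ * P))

/-- All eigenvalues of the complex matrix `M` are real and less than `c`. -/
def eigsRealAndLT (M : Matrix (Fin n) (Fin n) ℂ) (c : ℝ) : Prop :=
  ∀ μ ∈ spectrum ℂ M, μ.im = 0 ∧ μ.re < c

/-- The (real) eigenvalues of the real matrix `M` are all real and its largest
eigenvalue is less than `c`. -/
def maxEigLT (M : Matrix (Fin n) (Fin n) ℝ) (c : ℝ) : Prop :=
  eigsRealAndLT (M.map (Complex.ofReal)) c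

/-- Loewner order `A ≤ B` on real matrices. -/
def LoewnerLE (A B : Matrix (Fin n) (Fin n) ℝ) : Prop := (B - A).PosSemidef

/-- Strict Loewner order `A < B` on real matrices. -/
def LoewnerLT (A B : Matrix (Fin n) (Fin n) ℝ) : Prop := (B - A).PosDef

/-!
A transfer matrix `G` is negative imaginary when `s • (G s - G ∞)` is accretive on the open right
half-plane. Negative feedback `Q = -Ψ` around the plant, compensated by adding `Q` to the
controller, removes the pole at the origin and keeps this property; so does the block-diagonal
combination `M` of the strictly proper parts of the shifted plant and of the controller. The loop
is then stable if and only if `B - M s` has an inverse converging at every point of the closed right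
half-plane, infinity included, where the Hermitian `B` is determined by the gains at infinity.

On the axis this invertibility comes from strictness of the controller. In the interior, a
Julia-type inequality at `0` bounds `M s` by its value `M 0` well enough that it suffices that
`B - E` be nonsingular for all `0 ≤ E ≤ M 0`. Conversely, if the loop is stable then
`(B - M s)⁻¹ - B⁻¹` is again negative imaginary, so it is positive semidefinite at `0`, which is an
equivalent form of the same condition. In this form the condition is transitive, so it can be
checked along two segments: the controller from `C ∞` to `C 0` against the plant at infinity, then
the shifted plant from `∞` to `0` against `C 0`. Along a segment, nonsingularity says that a product
of a Hermitian matrix and a positive semidefinite one has no eigenvalue in `[1, ∞)`; these are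
conditions (a), (b) and (c).
-/

section HalfPlane

/-- The open right half-plane. -/
def openRHP : Set ℂ := {s | 0 < s.re}

theorem isOpen_openRHP : IsOpen openRHP :=
  isOpen_lt continuous_const Complex.continuous_re

theorem isPreconnected_openRHP : IsPreconnected openRHP :=
  (convex_halfSpace_re_gt 0).isPreconnected

theorem ne_zero_of_mem_openRHP {s : ℂ} (hs : s ∈ openRHP) : s ≠ 0 := by
  rintro rfl
  simp [openRHP] at hs

theorem continuous_jw : Continuous jw := by
  unfold jw
  fun_prop

theorem jw_injective : Function.Injective jw := fun a b h => by simpa [jw] using h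

theorem jw_zero : jw 0 = 0 := by simp [jw]

theorem jw_re (ω : ℝ) : (jw ω).re = 0 := by simp [jw]

theorem eq_jw_im {s : ℂ} (hs : s.re = 0) : s = jw s.im := by
  apply Complex.ext <;> simp [jw, hs]

theorem tendsto_jw_nhdsNE (ω : ℝ) : Tendsto jw (𝓝[≠] ω) (𝓝[≠] (jw ω)) :=
  continuous_jw.continuousWithinAt.tendsto_nhdsWithin fun _ h => jw_injective.ne h

theorem tendsto_jw_atTop : Tendsto jw atTop (Bornology.cobounded ℂ) := by
  rw [← tendsto_norm_atTop_iff_cobounded]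
  simpa [jw] using tendsto_abs_atTop_atTop

theorem nhdsWithin_openRHP_le_nhdsNE (ω : ℝ) : 𝓝[openRHP] (jw ω) ≤ 𝓝[≠] (jw ω) := by
  refine nhdsWithin_mono _ fun s (hs : 0 < s.re) => ?_
  rintro rfl
  exact hs.ne' (jw_re ω)

instance nhdsWithin_openRHP_neBot (ω : ℝ) : (𝓝[openRHP] (jw ω)).NeBot := by
  rw [← mem_closure_iff_nhdsWithin_neBot, openRHP, Complex.closure_setOfPred_lt_re]
  exact (jw_re ω).ge

end HalfPlane

section MaximumPrinciple

variable {f : ℂ → ℂ}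

theorem isCompact_sublevel_of_boundary {c : ℝ} (hf : ContinuousOn f openRHP)
    (haxis : ∀ ω, ∀ᶠ s in 𝓝[openRHP] (jw ω), c < (f s).re)
    (hinf : ∀ᶠ s in Bornology.cobounded ℂ ⊓ 𝓟 openRHP, c < (f s).re) :
    IsCompact {s ∈ openRHP | (f s).re ≤ c} := by
  refine Metric.isCompact_of_isClosed_isBounded ?_ ?_
  · refine isClosed_iff_frequently.2 fun s hs => ?_
    have hs_freq : ∃ᶠ z in 𝓝[openRHP] s, (f z).re ≤ c := frequently_nhdsWithin_iff.2
      (hs.mono fun z hz => hz.symm)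
    have hs_re : 0 ≤ s.re := ge_of_tendsto_of_frequently
      (Complex.continuous_re.tendsto s) (hs.mono fun z hz => le_of_lt hz.1)
    have hs_mem : s ∈ openRHP := by
      refine lt_of_le_of_ne hs_re fun h0 => hs_freq ?_
      rw [eq_jw_im h0.symm]
      exact (haxis _).mono fun z hz => not_le.2 hz
    exact ⟨hs_mem, le_of_tendsto_of_frequently
      (Complex.continuous_re.continuousAt.tendsto.comp (hf s hs_mem)) hs_freq⟩
  · rw [← Bornology.isCobounded_compl_iff]
    filter_upwards [eventually_inf_principal.1 hinf] with s hs hmem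
    exact (hs hmem.1).not_ge hmem.2

theorem re_nonneg_of_boundary (hf : DifferentiableOn ℂ f openRHP)
    (haxis : ∀ ω, ∀ ε > 0, ∀ᶠ s in 𝓝[openRHP] (jw ω), -ε < (f s).re)
    (hinf : ∀ ε > 0, ∀ᶠ s in Bornology.cobounded ℂ ⊓ 𝓟 openRHP, -ε < (f s).re)
    {s : ℂ} (hs : s ∈ openRHP) : 0 ≤ (f s).re := by
  by_contra! hneg
  have hε : 0 < -(f s).re := neg_pos.2 hneg
  have hcompact := isCompact_sublevel_of_boundary hf.continuousOn (fun ω => haxis ω _ hε)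
    (hinf _ hε)
  rw [neg_neg] at hcompact
  obtain ⟨z, ⟨hz, hz_le⟩, hz_min⟩ := hcompact.exists_isMinOn ⟨s, hs, le_rfl⟩
    (Complex.continuous_re.comp_continuousOn (hf.continuousOn.mono fun x hx => hx.1))
  have hmin : ∀ x ∈ openRHP, (f z).re ≤ (f x).re := fun x hx => by
    rcases le_total (f x).re (f s).re with h | h
    · exact hz_min ⟨hx, h⟩
    · exact hz_le.trans h
  -- `exp (-f)` attains its maximum modulus at `z`, so its modulus is constant
  have hmax : IsMaxOn (norm ∘ fun x => Complex.exp (-f x)) openRHP z := fun x hx => by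
    simpa [Complex.norm_exp] using hmin x hx
  have hconst := Complex.norm_eqOn_of_isPreconnected_of_isMaxOn isPreconnected_openRHP
    isOpen_openRHP hf.neg.cexp hz hmax
  obtain ⟨x, hx_lt, hx⟩ := ((haxis 0 _ hε).and self_mem_nhdsWithin).exists
  have : (f x).re = (f z).re := by simpa [Complex.norm_exp] using hconst hx
  linarith

end MaximumPrinciple

section Meromorphic

variable {f : ℂ → ℂ} {a c : ℂ}

theorem meromorphicAt_exists_tendsto_slope (hf : MeromorphicAt f a)
    (hc : Tendsto f (𝓝[≠] a) (𝓝 c)) :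
    ∃ d, Tendsto (fun s => (s - a)⁻¹ * (f s - c)) (𝓝[≠] a) (𝓝 d) := by
  have hupdate : Function.update f a c =ᶠ[𝓝[≠] a] f :=
    eventually_mem_nhdsWithin.mono fun s hs => Function.update_of_ne hs _ _
  have hcont : ContinuousAt (Function.update f a c) a := continuousAt_update_same.2 hc
  have hderiv := ((hf.congr hupdate.symm).analyticAt hcont).differentiableAt.hasDerivAt
  refine ⟨_, (hasDerivAt_iff_tendsto_slope.1 hderiv).congr' ?_⟩
  filter_upwards [hupdate] with s hs
  rw [slope_def_field, hs, Function.update_self, div_eq_inv_mul]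

theorem meromorphicAt_exists_tendsto_sub_pole (hf : MeromorphicAt f a)
    (hc : Tendsto (fun s => (s - a) * f s) (𝓝[≠] a) (𝓝 c)) :
    ∃ d, Tendsto (fun s => f s - (s - a)⁻¹ * c) (𝓝[≠] a) (𝓝 d) := by
  obtain ⟨d, hd⟩ := meromorphicAt_exists_tendsto_slope (by fun_prop) hc
  refine ⟨d, hd.congr' (eventually_mem_nhdsWithin.mono fun s hs => ?_)⟩
  have : s - a ≠ 0 := sub_ne_zero.2 hs
  field_simp

theorem exists_tendsto_mul_cobounded (hf : MeromorphicAt (fun z => f z⁻¹) 0)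
    (hc : Tendsto f (Bornology.cobounded ℂ) (𝓝 0)) :
    ∃ d, Tendsto (fun s => s * f s) (Bornology.cobounded ℂ) (𝓝 d) := by
  obtain ⟨d, hd⟩ := meromorphicAt_exists_tendsto_slope hf (hc.comp tendsto_inv₀_nhdsNE_zero)
  exact ⟨d, (hd.comp tendsto_inv₀_cobounded').congr fun s => by simp⟩

theorem eventually_ne_zero_of_forall_openRHP (hf : ∀ a, MeromorphicAt f a)
    (h0 : ∀ s ∈ openRHP, f s ≠ 0) (a : ℂ) : ∀ᶠ s in 𝓝[≠] a, f s ≠ 0 := by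
  rw [← meromorphicOrderAt_ne_top_iff_eventually_ne_zero (hf a)]
  have h1 : meromorphicOrderAt f 1 ≠ ⊤ := by
    rw [meromorphicOrderAt_ne_top_iff_eventually_ne_zero (hf 1)]
    exact (eventually_of_mem (isOpen_openRHP.mem_nhds (by simp [openRHP])) h0).filter_mono
      nhdsWithin_le_nhds
  exact MeromorphicOn.meromorphicOrderAt_ne_top_of_isPreconnected (U := Set.univ)
    (fun x _ => hf x) isPreconnected_univ trivial trivial h1

end Meromorphic

section Accretive

variable {m k ι : Type*} [Fintype m] [Fintype k]

/-- A complex matrix is accretive when its Hermitian part is positive semidefinite, here expressed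
through the quadratic form. A negative imaginary `M` is one for which `s • M s` is accretive on the
imaginary axis. -/
def Accretive (A : Matrix m m ℂ) : Prop :=
  ∀ w : m → ℂ, 0 ≤ (star w ⬝ᵥ A *ᵥ w).re

theorem Accretive.add {A B : Matrix m m ℂ} (hA : Accretive A) (hB : Accretive B) :
    Accretive (A + B) := fun w => by
  rw [add_mulVec, dotProduct_add, Complex.add_re]
  exact add_nonneg (hA w) (hB w)

theorem star_dotProduct_conj_mulVec (A : Matrix m m ℂ) (S : Matrix m k ℂ) (w : k → ℂ) :
    star w ⬝ᵥ (Sᴴ * A * S) *ᵥ w = star (S *ᵥ w) ⬝ᵥ A *ᵥ (S *ᵥ w) := by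
  rw [star_mulVec, ← mulVec_mulVec, ← mulVec_mulVec, dotProduct_mulVec (star w)]

theorem Accretive.conjTranspose_mul_mul_same {A : Matrix m m ℂ} (hA : Accretive A)
    (S : Matrix m k ℂ) : Accretive (Sᴴ * A * S) := fun w => by
  rw [star_dotProduct_conj_mulVec]
  exact hA _

theorem accretive_of_conjTranspose_mul_mul_same [DecidableEq m] {A S : Matrix m m ℂ}
    (hS : S.det ≠ 0) (h : Accretive (Sᴴ * A * S)) : Accretive A := fun w => by
  have := h (S⁻¹ *ᵥ w)
  rwa [star_dotProduct_conj_mulVec, mulVec_mulVec, mul_nonsing_inv _ hS.isUnit, one_mulVec] at this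

theorem star_dotProduct_conjTranspose_mulVec (A : Matrix m m ℂ) (w : m → ℂ) :
    star w ⬝ᵥ Aᴴ *ᵥ w = star (star w ⬝ᵥ A *ᵥ w) := by
  rw [← star_dotProduct, star_mulVec, dotProduct_mulVec]

theorem Accretive.conjTranspose {A : Matrix m m ℂ} (hA : Accretive A) : Accretive Aᴴ := fun w => by
  rw [star_dotProduct_conjTranspose_mulVec, Complex.star_def, Complex.conj_re]
  exact hA w

theorem accretive_of_tendsto {l : Filter ι} {F : ι → Matrix m m ℂ} {A : Matrix m m ℂ}
    (hF : Tendsto F l (𝓝 A)) (h : ∃ᶠ x in l, Accretive (F x)) : Accretive A := fun w => by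
  have hform : Continuous fun B : Matrix m m ℂ => (star w ⬝ᵥ B *ᵥ w).re := by fun_prop
  exact ge_of_tendsto_of_frequently ((hform.tendsto A).comp hF) (h.mono fun x hx => hx w)

theorem accretive_of_pos_smul {A : Matrix m m ℂ} {x : ℝ} (hx : 0 < x)
    (h : Accretive ((x : ℂ) • A)) : Accretive A := fun w => by
  have := h w
  rw [smul_mulVec, dotProduct_smul, smul_eq_mul, Complex.re_ofReal_mul] at this
  exact nonneg_of_mul_nonneg_right this hx

theorem star_dotProduct_mulVec_eq_re {A : Matrix m m ℂ} (hA : A.IsHermitian) (w : m → ℂ) :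
    star w ⬝ᵥ A *ᵥ w = ((star w ⬝ᵥ A *ᵥ w).re : ℂ) :=
  Complex.ext rfl (hA.im_star_dotProduct_mulVec_self w)

theorem smul_form_re {A : Matrix m m ℂ} (hA : A.IsHermitian) (c : ℂ) (w : m → ℂ) :
    (star w ⬝ᵥ (c • A) *ᵥ w).re = c.re * (star w ⬝ᵥ A *ᵥ w).re := by
  rw [smul_mulVec, dotProduct_smul, star_dotProduct_mulVec_eq_re hA, smul_eq_mul,
    Complex.re_mul_ofReal, Complex.ofReal_re]

theorem accretive_iff_posSemidef {A : Matrix m m ℂ} (hA : A.IsHermitian) :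
    Accretive A ↔ A.PosSemidef := by
  refine ⟨fun h => .of_dotProduct_mulVec_nonneg hA fun w => ?_, fun h => h.re_dotProduct_nonneg⟩
  rw [star_dotProduct_mulVec_eq_re hA]
  exact Complex.zero_le_real.2 (h w)

theorem isHermitian_of_accretive_I_smul {A : Matrix m m ℂ} (hpos : Accretive (Complex.I • A))
    (hneg : Accretive (-Complex.I • A)) : A.IsHermitian := by
  classical
  have him (w : m → ℂ) : (star w ⬝ᵥ A *ᵥ w).im = 0 := by
    have h₁ := hpos w
    have h₂ := hneg w
    simp only [smul_mulVec, dotProduct_smul, smul_eq_mul, neg_mul, Complex.neg_re,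
      Complex.I_mul_re] at h₁ h₂
    linarith
  rw [← isSymmetric_toEuclideanLin_iff, LinearMap.isSymmetric_iff_inner_map_self_real]
  intro x
  rw [Complex.conj_eq_iff_im, EuclideanSpace.inner_eq_star_dotProduct, ofLp_toLpLin, toLin'_apply,
    dotProduct_comm, star_dotProduct, Complex.star_def, Complex.conj_im, him, neg_zero]

theorem accretive_smul_of_posSemidef {A : Matrix m m ℂ} (hA : A.PosSemidef) {c : ℂ}
    (hc : 0 ≤ c.re) : Accretive (c • A) := fun w => by
  rw [smul_form_re hA.1]
  exact mul_nonneg hc (hA.re_dotProduct_nonneg w)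

theorem accretive_smul_of_isHermitian {A : Matrix m m ℂ} (hA : A.IsHermitian) {c : ℂ}
    (hc : c.re = 0) : Accretive (c • A) := fun w => by
  rw [smul_form_re hA, hc, zero_mul]

theorem det_ne_zero_iff_mulVec {R : Type*} [DecidableEq m] [CommRing R] [IsDomain R]
    {A : Matrix m m R} :
    A.det ≠ 0 ↔ ∀ w, A *ᵥ w = 0 → w = 0 := by
  rw [Ne, ← exists_mulVec_eq_zero_iff]
  push Not
  exact forall_congr' fun w => not_imp_not

theorem Accretive.inv [DecidableEq m] {A : Matrix m m ℂ} (hA : Accretive A) (hdet : A.det ≠ 0) :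
    Accretive A⁻¹ := by
  refine accretive_of_conjTranspose_mul_mul_same hdet ?_
  rw [Matrix.mul_assoc, nonsing_inv_mul _ hdet.isUnit, Matrix.mul_one]
  exact hA.conjTranspose

theorem nonsing_inv_neg {R : Type*} [DecidableEq m] [CommRing R] (A : Matrix m m R) :
    (-A)⁻¹ = -A⁻¹ := by
  by_cases hA : IsUnit A
  · refine inv_eq_left_inv ?_
    rw [neg_mul_neg, nonsing_inv_mul _ ((isUnit_iff_isUnit_det A).1 hA)]
  · rw [nonsing_inv_eq_ringInverse, nonsing_inv_eq_ringInverse,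
      Ring.inverse_non_unit _ (IsUnit.neg_iff A |>.not.2 hA), Ring.inverse_non_unit _ hA, neg_zero]

theorem inv_sub_sub_inv {K : Type*} [DecidableEq m] [Field K] {B M : Matrix m m K}
    (hB : B.det ≠ 0) (hBM : (B - M).det ≠ 0) : (B - M)⁻¹ - B⁻¹ = (B - M)⁻¹ * M * B⁻¹ := by
  rw [Matrix.inv_sub_inv (by simp only [isUnit_iff_isUnit_det, hB.isUnit, hBM.isUnit]),
    sub_sub_cancel]

theorem Accretive.inv_smul_inv [DecidableEq m] {A : Matrix m m ℂ} {s : ℂ} (hs : s ≠ 0)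
    (hA : Accretive (s • A)) (hdet : A.det ≠ 0) : Accretive (s⁻¹ • A⁻¹) := by
  have h := hA.inv (by simpa [hs] using hdet)
  rwa [show (s • A)⁻¹ = s⁻¹ • A⁻¹ from inv_smul' A (Units.mk0 s hs) hdet.isUnit] at h

/-- Conjugating by `B - M` turns the increment of the inverse into `M - Mᴴ B⁻¹ M`. -/
theorem accretive_smul_inv_sub_sub_inv [DecidableEq m] {B M : Matrix m m ℂ} {s : ℂ}
    (hBH : B.IsHermitian) (hB : B.det ≠ 0) (hBM : (B - M).det ≠ 0) (hM : Accretive (s • M))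
    (hs : Accretive (s • -B⁻¹)) : Accretive (s • ((B - M)⁻¹ - B⁻¹)) := by
  refine accretive_of_conjTranspose_mul_mul_same hBM ?_
  have hinv : ((B - M)⁻¹ - B⁻¹) * (B - M) = B⁻¹ * M := by
    rw [Matrix.sub_mul, nonsing_inv_mul _ hBM.isUnit, Matrix.mul_sub,
      nonsing_inv_mul _ hB.isUnit, sub_sub_cancel]
  have hcongr : (B - M)ᴴ * (s • ((B - M)⁻¹ - B⁻¹)) * (B - M)
      = s • M + Mᴴ * (s • -B⁻¹) * M := by
    rw [Matrix.mul_smul, Matrix.smul_mul, Matrix.mul_assoc, hinv, conjTranspose_sub, hBH.eq,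
      Matrix.sub_mul, ← Matrix.mul_assoc, mul_nonsing_inv _ hB.isUnit, Matrix.one_mul,
      ← Matrix.mul_assoc, Matrix.mul_smul, Matrix.smul_mul, Matrix.mul_neg, Matrix.neg_mul,
      ← smul_add, sub_eq_add_neg]
  rw [hcongr]
  exact hM.add (hs.conjTranspose_mul_mul_same M)

end Accretive

section NonsingularBelow

variable {m k : Type*} [Fintype m] [Fintype k]

open scoped MatrixOrder in
theorem exists_eq_conjTranspose_mul_self {E : Matrix m m ℂ} (hE : E.PosSemidef) :
    ∃ R : Matrix m m ℂ, E = Rᴴ * R := by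
  classical
  exact CStarAlgebra.nonneg_iff_eq_star_mul_self.1 hE.nonneg

variable [DecidableEq m] [DecidableEq k]

theorem posDef_one_sub_iff_det_ne_zero {H : Matrix m m ℂ} (hH : H.IsHermitian) :
    (1 - H).PosDef ↔ ∀ t ∈ Set.Icc (0 : ℝ) 1, (1 - (t : ℂ) • H).det ≠ 0 := by
  constructor
  · rintro h t ⟨h0, h1⟩
    rcases h0.eq_or_lt with rfl | h0
    · simp
    · have hpos : (((1 - t : ℝ) : ℂ) • (1 : Matrix m m ℂ) + (t : ℂ) • (1 - H)).PosDef :=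
        PosDef.posSemidef_add (PosSemidef.one.smul (by exact_mod_cast sub_nonneg.2 h1))
          (h.smul (by exact_mod_cast h0))
      have hcombo : 1 - (t : ℂ) • H
          = ((1 - t : ℝ) : ℂ) • (1 : Matrix m m ℂ) + (t : ℂ) • (1 - H) := by
        push_cast
        module
      exact hcombo ▸ hpos.det_pos.ne'
  · intro h
    have h1H := isHermitian_one.sub hH
    refine h1H.posDef_iff_eigenvalues_pos.2 fun i => by_contra fun hneg => ?_
    set μ := h1H.eigenvalues i
    have hμ : 1 ≤ 1 - μ := by linarith
    have heigen : H *ᵥ h1H.eigenvectorBasis i = ((1 - μ : ℝ) : ℂ) • ⇑(h1H.eigenvectorBasis i) := by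
      have := h1H.mulVec_eigenvectorBasis i
      rw [sub_mulVec, one_mulVec, sub_eq_iff_eq_add] at this
      rw [Complex.coe_smul, sub_smul, one_smul, eq_sub_iff_add_eq, add_comm, ← this]
    refine h (1 - μ)⁻¹ ⟨by positivity, inv_le_one_of_one_le₀ hμ⟩ (exists_mulVec_eq_zero_iff.1
      ⟨_, (WithLp.ofLp_eq_zero 2).not.2 (h1H.eigenvectorBasis.orthonormal.ne_zero i), ?_⟩)
    rw [sub_mulVec, smul_mulVec, heigen, smul_smul, ← Complex.ofReal_mul,
      inv_mul_cancel₀ (by positivity), Complex.ofReal_one, one_smul, one_mulVec, sub_self]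

theorem det_sub_smul_conjTranspose_mul_self {B : Matrix m m ℂ} (hB : B.det ≠ 0)
    (R : Matrix k m ℂ) (t : ℂ) :
    (B - t • (Rᴴ * R)).det = B.det * (1 - t • (R * B⁻¹ * Rᴴ)).det := by
  have hfactor : B - t • (Rᴴ * R) = B * (1 - B⁻¹ * Rᴴ * (t • R)) := by
    rw [Matrix.mul_sub, Matrix.mul_one, Matrix.mul_assoc, ← Matrix.mul_assoc B,
      mul_nonsing_inv _ hB.isUnit, Matrix.one_mul, Matrix.mul_smul]
  rw [hfactor, det_mul, det_one_sub_mul_comm, Matrix.smul_mul, Matrix.mul_assoc R]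

theorem posSemidef_inv_sub_inv_of_posDef {B : Matrix m m ℂ} (hBH : B.IsHermitian)
    (hB : B.det ≠ 0) {R : Matrix k m ℂ} (h : (1 - R * B⁻¹ * Rᴴ).PosDef) :
    ((B - Rᴴ * R)⁻¹ - B⁻¹).PosSemidef := by
  have hwoodbury := add_mul_mul_inv_eq_sub (A := B) (C := (1 : Matrix k k ℂ)) (U := -Rᴴ) (V := R)
    ((isUnit_iff_isUnit_det _).2 hB.isUnit) isUnit_one
    (by simpa [← sub_eq_add_neg] using h.isUnit)
  have hdiff : (B - Rᴴ * R)⁻¹ - B⁻¹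
      = (R * B⁻¹)ᴴ * (1 - R * B⁻¹ * Rᴴ)⁻¹ * (R * B⁻¹) := by
    simp only [Matrix.mul_one, Matrix.neg_mul, Matrix.mul_neg, inv_one, ← sub_eq_add_neg,
      sub_neg_eq_add] at hwoodbury
    rw [hwoodbury, add_sub_cancel_left, conjTranspose_mul, hBH.inv.eq]
    simp only [Matrix.mul_assoc]
  rw [hdiff]
  exact h.inv.posSemidef.conjTranspose_mul_mul_same _

theorem posDef_of_posSemidef_add_inv_sub_two {A : Matrix m m ℂ} (hA : A.IsHermitian)
    (hdet : A.det ≠ 0) (h : (A + A⁻¹ - 2).PosSemidef) : A.PosDef := by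
  refine hA.posDef_iff_eigenvalues_pos.2 fun i => ?_
  set μ := hA.eigenvalues i
  set v : m → ℂ := ⇑(hA.eigenvectorBasis i)
  have hv : star v ⬝ᵥ v = 1 := by
    have := hA.eigenvectorBasis.orthonormal.1 i
    rw [dotProduct_comm, ← EuclideanSpace.inner_eq_star_dotProduct, inner_self_eq_norm_sq_to_K,
      this]
    simp
  have hAv : A *ᵥ v = (μ : ℂ) • v := by rw [Complex.coe_smul]; exact hA.mulVec_eigenvectorBasis i
  have hμ : (μ : ℂ) ≠ 0 := fun h0 => by
    rw [det_ne_zero_iff_mulVec.1 hdet v (by rw [hAv, h0, zero_smul])] at hv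
    simp at hv
  have hAinv : A⁻¹ *ᵥ v = (μ : ℂ)⁻¹ • v := by
    rw [eq_inv_smul_iff₀ hμ, ← mulVec_smul, ← hAv, mulVec_mulVec, nonsing_inv_mul _ hdet.isUnit,
      one_mulVec]
  have hsum : 0 ≤ μ + μ⁻¹ - 2 := by
    have hform := h.re_dotProduct_nonneg v
    have h2 : (2 : Matrix m m ℂ) *ᵥ v = (2 : ℂ) • v := by
      rw [← one_add_one_eq_two, add_mulVec, one_mulVec, two_smul]
    rw [sub_mulVec, add_mulVec, hAv, hAinv, h2, dotProduct_sub, dotProduct_add] at hform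
    simp only [dotProduct_smul, hv, smul_eq_mul, mul_one, ← Complex.ofReal_inv] at hform
    simpa using hform
  by_contra! hneg
  have := inv_nonpos.2 hneg
  linarith

theorem posDef_of_posSemidef_inv_sub_inv {B : Matrix m m ℂ} (hBH : B.IsHermitian)
    (hB : B.det ≠ 0) {R : Matrix k m ℂ} (hBR : (B - Rᴴ * R).det ≠ 0)
    (h : ((B - Rᴴ * R)⁻¹ - B⁻¹).PosSemidef) : (1 - R * B⁻¹ * Rᴴ).PosDef := by
  have hdet : (1 - R * B⁻¹ * Rᴴ).det ≠ 0 := by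
    have := det_sub_smul_conjTranspose_mul_self hB R 1
    rw [one_smul, one_smul] at this
    exact right_ne_zero_of_mul (this ▸ hBR)
  have hwoodbury : (1 - R * B⁻¹ * Rᴴ)⁻¹ = 1 + R * (B - Rᴴ * R)⁻¹ * Rᴴ := by
    have := add_mul_mul_inv_eq_sub (A := (1 : Matrix k k ℂ)) (C := B⁻¹) (U := -R) (V := Rᴴ)
      isUnit_one ((isUnit_iff_isUnit_det _).2 (isUnit_nonsing_inv_det _ hB.isUnit))
      (by simpa [← sub_eq_add_neg, isUnit_iff_isUnit_det, nonsing_inv_nonsing_inv _ hB.isUnit]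
        using hBR.isUnit)
    simpa [← sub_eq_add_neg, nonsing_inv_nonsing_inv _ hB.isUnit] using this
  refine posDef_of_posSemidef_add_inv_sub_two
    (isHermitian_one.sub (isHermitian_mul_mul_conjTranspose R hBH.inv)) hdet ?_
  convert h.mul_mul_conjTranspose_same R using 1
  rw [hwoodbury, ← one_add_one_eq_two, Matrix.mul_sub, Matrix.sub_mul]
  abel

/-- Nonsingularity of `B - E` for all positive semidefinite `E ≤ D`: the static form of the
stability criterion, with `E` ranging over all the gains between `0` and `D`. -/
def NonsingularBelow (B D : Matrix m m ℂ) : Prop :=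
  ∀ E : Matrix m m ℂ, E.PosSemidef → (D - E).PosSemidef → (B - E).det ≠ 0

theorem NonsingularBelow.det_sub_smul_ne_zero {B D : Matrix m m ℂ} (h : NonsingularBelow B D)
    (hD : D.PosSemidef) {t : ℝ} (ht : t ∈ Set.Icc (0 : ℝ) 1) : (B - (t : ℂ) • D).det ≠ 0 := by
  refine h _ (hD.smul (by exact_mod_cast ht.1)) ?_
  have hcompl : D - (t : ℂ) • D = ((1 - t : ℝ) : ℂ) • D := by
    push_cast
    module
  rw [hcompl]
  exact hD.smul (by exact_mod_cast sub_nonneg.2 ht.2)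

theorem posSemidef_inv_sub_inv_of_segment {B D : Matrix m m ℂ} (hB : B.IsHermitian)
    (hD : D.PosSemidef) (h : ∀ t ∈ Set.Icc (0 : ℝ) 1, (B - (t : ℂ) • D).det ≠ 0) :
    ((B - D)⁻¹ - B⁻¹).PosSemidef := by
  obtain ⟨R, rfl⟩ := exists_eq_conjTranspose_mul_self hD
  have hB0 : B.det ≠ 0 := by simpa using h 0 (by simp)
  refine posSemidef_inv_sub_inv_of_posDef hB hB0 <|
    (posDef_one_sub_iff_det_ne_zero (isHermitian_mul_mul_conjTranspose R hB.inv)).2 fun t ht => ?_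
  exact right_ne_zero_of_mul (det_sub_smul_conjTranspose_mul_self hB0 R t ▸ h t ht)

theorem nonsingularBelow_of_posSemidef_inv_sub_inv {B D : Matrix m m ℂ} (hBH : B.IsHermitian)
    (hB : B.det ≠ 0) (hBD : (B - D).det ≠ 0) (h : ((B - D)⁻¹ - B⁻¹).PosSemidef) :
    NonsingularBelow B D := by
  intro E hE hDE
  obtain ⟨R, hR⟩ := exists_eq_conjTranspose_mul_self hE
  obtain ⟨S, hS⟩ := exists_eq_conjTranspose_mul_self hDE
  have hD : D = (fromRows R S)ᴴ * fromRows R S := by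
    rw [conjTranspose_fromRows_eq_fromCols_conjTranspose, fromCols_mul_fromRows, ← hR, ← hS,
      add_sub_cancel]
  have hpos := posDef_of_posSemidef_inv_sub_inv hBH hB (R := fromRows R S) (hD ▸ hBD) (hD ▸ h)
  have htop : (1 - R * B⁻¹ * Rᴴ).PosDef := by
    convert hpos.submatrix (e := Sum.inl) Sum.inl_injective using 1
    rw [conjTranspose_fromRows_eq_fromCols_conjTranspose, fromRows_mul, fromRows_mul_fromCols,
      ← fromBlocks_one, sub_eq_add_neg (fromBlocks _ _ _ _), fromBlocks_neg, fromBlocks_add]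
    exact sub_eq_add_neg _ _
  have := det_sub_smul_conjTranspose_mul_self hB R 1
  rw [one_smul, one_smul, ← hR] at this
  exact this ▸ mul_ne_zero hB htop.det_pos.ne'

theorem nonsingularBelow_iff_posSemidef_inv_sub_inv {B D : Matrix m m ℂ} (hB : B.IsHermitian)
    (hD : D.PosSemidef) : NonsingularBelow B D ↔
      B.det ≠ 0 ∧ (B - D).det ≠ 0 ∧ ((B - D)⁻¹ - B⁻¹).PosSemidef := by
  refine ⟨fun h => ⟨?_, ?_, posSemidef_inv_sub_inv_of_segment hB hD
      fun t => h.det_sub_smul_ne_zero hD⟩,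
    fun ⟨h0, h1, h⟩ => nonsingularBelow_of_posSemidef_inv_sub_inv hB h0 h1 h⟩
  · simpa using h 0 .zero (by simpa using hD)
  · exact h D hD (by simpa using PosSemidef.zero)

theorem nonsingularBelow_iff_segment {B D : Matrix m m ℂ} (hB : B.IsHermitian)
    (hD : D.PosSemidef) :
    NonsingularBelow B D ↔ ∀ t ∈ Set.Icc (0 : ℝ) 1, (B - (t : ℂ) • D).det ≠ 0 := by
  refine ⟨fun h t => h.det_sub_smul_ne_zero hD, fun h => ?_⟩
  refine nonsingularBelow_of_posSemidef_inv_sub_inv hB ?_ ?_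
    (posSemidef_inv_sub_inv_of_segment hB hD h)
  · simpa using h 0 (by simp)
  · simpa using h 1 (by simp)

theorem nonsingularBelow_add_iff {B D E : Matrix m m ℂ} (hB : B.IsHermitian) (hD : D.PosSemidef)
    (hE : E.PosSemidef) :
    NonsingularBelow B (D + E) ↔ NonsingularBelow B D ∧ NonsingularBelow (B - D) E := by
  constructor
  · intro h
    refine ⟨fun F hF hDF => h F hF ?_, fun F hF hEF => ?_⟩
    · rw [add_sub_right_comm]
      exact hDF.add hE
    · rw [sub_sub]
      exact h _ (hD.add hF) (by rwa [add_sub_add_left_eq_sub])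
  · rw [nonsingularBelow_iff_posSemidef_inv_sub_inv hB hD,
      nonsingularBelow_iff_posSemidef_inv_sub_inv (hB.sub hD.1) hE, sub_sub]
    rintro ⟨⟨hB0, -, hD_le⟩, -, hDE, hE_le⟩
    refine nonsingularBelow_of_posSemidef_inv_sub_inv hB hB0 hDE ?_
    simpa using hE_le.add hD_le

theorem exists_pos_posDef_inv_sub_inv_add {B : Matrix m m ℂ} (hBH : B.IsHermitian)
    (hB : B.det ≠ 0) : ∃ η : ℝ, 0 < η ∧ (B + (η : ℂ) • 1).det ≠ 0 ∧
      (B⁻¹ - (B + (η : ℂ) • 1)⁻¹).PosDef := by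
  have hcont : Continuous fun τ : ℝ => (1 + (τ : ℂ) • B⁻¹).det := by fun_prop
  obtain ⟨η, hη, hball⟩ := Metric.eventually_nhds_iff_ball.1
    (hcont.continuousAt.eventually_ne (x := 0) (y := 0) (by simp))
  have hη2 : 0 < η / 2 := half_pos hη
  have hpos : (1 + ((η / 2 : ℝ) : ℂ) • B⁻¹).PosDef := by
    have := (posDef_one_sub_iff_det_ne_zero (H := -(((η / 2 : ℝ) : ℂ) • B⁻¹)) ?_).2 ?_
    · rwa [sub_neg_eq_add] at this
    · exact (hBH.inv.smul (Complex.conj_ofReal _)).neg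
    · rintro t ⟨h0, h1⟩
      rw [smul_neg, sub_neg_eq_add, smul_smul, ← Complex.ofReal_mul]
      refine hball _ (mem_ball_zero_iff.2 ?_)
      rw [Real.norm_of_nonneg (by positivity)]
      nlinarith
  have hfactor : B + ((η / 2 : ℝ) : ℂ) • 1 = B * (1 + ((η / 2 : ℝ) : ℂ) • B⁻¹) := by
    rw [Matrix.mul_add, Matrix.mul_one, Matrix.mul_smul, mul_nonsing_inv _ hB.isUnit]
  have hdet : (B + ((η / 2 : ℝ) : ℂ) • 1).det ≠ 0 := by
    rw [hfactor, det_mul]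
    exact mul_ne_zero hB hpos.det_pos.ne'
  have hdiff : B⁻¹ - (B + ((η / 2 : ℝ) : ℂ) • 1)⁻¹
      = B⁻¹ᴴ * (((η / 2 : ℝ) : ℂ) • (1 + ((η / 2 : ℝ) : ℂ) • B⁻¹)⁻¹) * B⁻¹ := by
    rw [Matrix.inv_sub_inv (by simp only [isUnit_iff_isUnit_det, hB.isUnit, hdet.isUnit]),
      add_sub_cancel_left, hfactor, Matrix.mul_inv_rev, hBH.inv.eq]
    simp only [Matrix.mul_smul, Matrix.smul_mul, Matrix.mul_one, Matrix.mul_assoc]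
  refine ⟨η / 2, hη2, hdet, ?_⟩
  rw [hdiff]
  exact (hpos.inv.smul (by exact_mod_cast hη2)).conjTranspose_mul_mul_same
    (mulVec_injective_of_isUnit ((isUnit_iff_isUnit_det _).2 (isUnit_nonsing_inv_det _ hB.isUnit)))

end NonsingularBelow

section Eigenvalues

variable {m : Type*} [Fintype m] [DecidableEq m]

theorem mem_spectrum_iff_det_sub {K : Type*} [Field K] {X : Matrix m m K} {μ : K} :
    μ ∈ spectrum K X ↔ (μ • 1 - X).det = 0 := by
  rw [spectrum.mem_iff, isUnit_iff_isUnit_det, isUnit_iff_ne_zero, not_not,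
    Algebra.algebraMap_eq_smul_one]

theorem eigsRealAndLT_one_iff_det_ne_zero {X : Matrix (Fin n) (Fin n) ℂ}
    (hreal : ∀ μ ∈ spectrum ℂ X, μ.im = 0) :
    eigsRealAndLT X 1 ↔ ∀ t ∈ Set.Icc (0 : ℝ) 1, (1 - (t : ℂ) • X).det ≠ 0 := by
  have hinv {μ : ℂ} (hμ : μ ≠ 0) : (1 - μ⁻¹ • X).det = 0 ↔ μ ∈ spectrum ℂ X := by
    have hscale : μ • 1 - X = μ • (1 - μ⁻¹ • X) := by
      rw [smul_sub, smul_inv_smul₀ hμ]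
    rw [mem_spectrum_iff_det_sub, hscale, det_smul, mul_eq_zero_iff_left (pow_ne_zero _ hμ)]
  constructor
  · rintro h t ⟨ht0, ht1⟩ hdet
    rcases ht0.eq_or_lt with rfl | ht0
    · simp at hdet
    · have hmem := (hinv (μ := ((t⁻¹ : ℝ) : ℂ)) (by simpa using ht0.ne')).1 (by simpa using hdet)
      exact absurd ((one_le_inv₀ ht0).2 ht1) (h _ hmem).2.not_ge
  · refine fun h μ hμ => ⟨hreal μ hμ, by_contra fun hlt => ?_⟩
    have hμre : μ = (μ.re : ℂ) := Complex.ext rfl (hreal μ hμ)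
    have hpos : 0 < μ.re := by linarith
    refine h μ.re⁻¹ ⟨by positivity, inv_le_one_of_one_le₀ (not_lt.1 hlt)⟩ ?_
    rw [Complex.ofReal_inv, ← hμre]
    exact (hinv (by rw [hμre]; exact_mod_cast hpos.ne')).2 hμ

theorem im_eq_zero_of_mem_spectrum_mul {W E : Matrix m m ℂ} (hW : W.IsHermitian)
    (hE : E.PosSemidef) {μ : ℂ} (hμ : μ ∈ spectrum ℂ (W * E)) : μ.im = 0 := by
  obtain ⟨R, rfl⟩ := exists_eq_conjTranspose_mul_self hE
  by_cases h0 : μ = 0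
  · rw [h0, Complex.zero_im]
  have hmem : μ ∈ spectrum ℂ (R * (W * Rᴴ)) \ {0} := by
    rw [← spectrum.nonzero_mul_comm, Matrix.mul_assoc]
    exact ⟨hμ, h0⟩
  rw [← Matrix.mul_assoc, (isHermitian_mul_mul_conjTranspose R hW).spectrum_eq_image_range] at hmem
  obtain ⟨⟨x, -, rfl⟩, -⟩ := hmem
  exact Complex.ofReal_im x

theorem eigsRealAndLT_sub_one_iff {X : Matrix (Fin n) (Fin n) ℂ} :
    eigsRealAndLT (X - 1) 0 ↔ eigsRealAndLT X 1 := by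
  have hshift (μ : ℂ) : μ ∈ spectrum ℂ X ↔ μ - 1 ∈ spectrum ℂ (X - 1) := by
    rw [mem_spectrum_iff_det_sub, mem_spectrum_iff_det_sub, sub_smul, one_smul,
      sub_sub_sub_cancel_right]
  constructor
  · intro h μ hμ
    simpa using h _ ((hshift μ).1 hμ)
  · intro h μ hμ
    have := h (μ + 1) ((hshift _).2 (by simpa using hμ))
    simpa using this

theorem inv_one_sub_mul_mul {k R : Type*} [Fintype k] [DecidableEq k] [CommRing R]
    (A : Matrix m k R) (B : Matrix k m R)
    (h : IsUnit (1 - A * B).det) : (1 - A * B)⁻¹ * A = A * (1 - B * A)⁻¹ := by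
  have h' : IsUnit (1 - B * A).det := by rwa [det_one_sub_mul_comm]
  calc (1 - A * B)⁻¹ * A
      = (1 - A * B)⁻¹ * (A * (1 - B * A)) * (1 - B * A)⁻¹ := by
        rw [Matrix.mul_assoc, Matrix.mul_assoc, mul_nonsing_inv _ h', Matrix.mul_one]
    _ = (1 - A * B)⁻¹ * ((1 - A * B) * A) * (1 - B * A)⁻¹ := by
        simp only [Matrix.mul_sub, Matrix.sub_mul, Matrix.mul_one, Matrix.one_mul, Matrix.mul_assoc]
    _ = A * (1 - B * A)⁻¹ := by rw [nonsing_inv_mul_cancel_left _ _ h]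

theorem isHermitian_inv_one_sub_mul_mul {D A : Matrix m m ℂ} (hD : D.IsHermitian)
    (hA : A.IsHermitian) (h : (1 - D * A).det ≠ 0) : ((1 - D * A)⁻¹ * D).IsHermitian := by
  rw [IsHermitian, conjTranspose_mul, conjTranspose_nonsing_inv, conjTranspose_sub,
    conjTranspose_mul, conjTranspose_one, hD.eq, hA.eq, inv_one_sub_mul_mul _ _ h.isUnit]

theorem eigsRealAndLT_iff_det_one_sub_mul_ne_zero {D A E : Matrix (Fin n) (Fin n) ℂ}
    (hD : D.IsHermitian) (hA : A.IsHermitian) (hE : E.PosSemidef) (h : (1 - D * A).det ≠ 0) :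
    eigsRealAndLT ((1 - D * A)⁻¹ * (D * (A + E) - 1)) 0 ↔
      ∀ t ∈ Set.Icc (0 : ℝ) 1, (1 - D * (A + (t : ℂ) • E)).det ≠ 0 := by
  set W := (1 - D * A)⁻¹ * D with hWdef
  have hW : W.IsHermitian := isHermitian_inv_one_sub_mul_mul hD hA h
  have hfactor (t : ℂ) : 1 - D * (A + t • E) = (1 - D * A) * (1 - t • (W * E)) := by
    rw [hWdef, Matrix.mul_sub, Matrix.mul_one, Matrix.mul_smul, Matrix.mul_assoc,
      mul_nonsing_inv_cancel_left _ _ h.isUnit, Matrix.mul_add, Matrix.mul_smul, sub_sub]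
  have hshift : (1 - D * A)⁻¹ * (D * (A + E) - 1) = W * E - 1 := by
    have h1 := hfactor 1
    rw [one_smul, one_smul] at h1
    rw [← neg_sub 1, h1, Matrix.mul_neg, nonsing_inv_mul_cancel_left _ _ h.isUnit, neg_sub]
  rw [hshift, eigsRealAndLT_sub_one_iff,
    eigsRealAndLT_one_iff_det_ne_zero fun _ => im_eq_zero_of_mem_spectrum_mul hW hE]
  simp only [hfactor, det_mul, mul_ne_zero_iff, h, ne_eq, not_false_eq_true, true_and]

theorem posDef_inv_add_of_eigsRealAndLT {D Q : Matrix (Fin n) (Fin n) ℂ} (hD : D.IsHermitian)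
    (hQ : Q.PosDef) (h : eigsRealAndLT (D * -Q) 1) : (Q⁻¹ + D).PosDef := by
  obtain ⟨R, hR⟩ := exists_eq_conjTranspose_mul_self hQ.posSemidef
  have hRdet : R.det ≠ 0 := by
    have := hQ.det_pos.ne'
    rw [hR, det_mul] at this
    exact right_ne_zero_of_mul this
  have hspec := (eigsRealAndLT_one_iff_det_ne_zero fun _ =>
    im_eq_zero_of_mem_spectrum_mul hD.neg hQ.posSemidef).1
      (by rwa [Matrix.neg_mul, ← Matrix.mul_neg])
  have hpos : (1 - R * -D * Rᴴ).PosDef := by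
    refine (posDef_one_sub_iff_det_ne_zero (isHermitian_mul_mul_conjTranspose R hD.neg)).2
      fun t ht => ?_
    have := hspec t ht
    rwa [hR, ← Matrix.mul_assoc, ← Matrix.mul_smul, det_one_sub_mul_comm, Matrix.smul_mul,
      ← Matrix.mul_assoc] at this
  have hcongr : Q⁻¹ + D = R⁻¹ * (1 - R * -D * Rᴴ) * R⁻¹ᴴ := by
    rw [Matrix.mul_sub, Matrix.sub_mul, Matrix.mul_one, conjTranspose_nonsing_inv, hR,
      Matrix.mul_inv_rev, Matrix.mul_assoc R, nonsing_inv_mul_cancel_left _ _ hRdet.isUnit,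
      mul_nonsing_inv_cancel_right _ _ (by simpa using hRdet), sub_neg_eq_add]
  rw [hcongr]
  exact hpos.mul_mul_conjTranspose_same (vecMul_injective_of_isUnit
    ((isUnit_iff_isUnit_det _).2 (isUnit_nonsing_inv_det _ hRdet.isUnit)))

end Eigenvalues

section MatrixLimits

variable {ι m : Type*} [Fintype m] [DecidableEq m] {l : Filter ι} {F : ι → Matrix m m ℂ}
  {A L : Matrix m m ℂ}

theorem tendsto_matrix_iff {k p R : Type*} [TopologicalSpace R] {G : ι → Matrix k p R}
    {B : Matrix k p R} :
    Tendsto G l (𝓝 B) ↔ ∀ i j, Tendsto (fun s => G s i j) l (𝓝 (B i j)) :=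
  tendsto_pi_nhds.trans (forall_congr' fun _ => tendsto_pi_nhds)

theorem exists_tendsto_matrix_iff {k p R : Type*} [TopologicalSpace R] {G : ι → Matrix k p R} :
    (∃ B, Tendsto G l (𝓝 B)) ↔ ∀ i j, ∃ b, Tendsto (fun s => G s i j) l (𝓝 b) := by
  refine ⟨fun ⟨B, hB⟩ i j => ⟨B i j, tendsto_matrix_iff.1 hB i j⟩, fun h => ?_⟩
  choose B hB using h
  exact ⟨of B, tendsto_matrix_iff.2 hB⟩

theorem tendsto_det (hF : Tendsto F l (𝓝 A)) : Tendsto (fun s => (F s).det) l (𝓝 A.det) :=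
  (continuous_id.matrix_det.tendsto A).comp hF

theorem eventually_det_ne_zero (hF : Tendsto F l (𝓝 A)) (hA : A.det ≠ 0) :
    ∀ᶠ s in l, (F s).det ≠ 0 :=
  (tendsto_det hF).eventually_ne hA

theorem tendsto_inv_of_det_ne_zero (hF : Tendsto F l (𝓝 A)) (hA : A.det ≠ 0) :
    Tendsto (fun s => (F s)⁻¹) l (𝓝 A⁻¹) := by
  refine (continuousAt_matrix_inv A ?_).tendsto.comp hF
  simpa only [Ring.inverse_eq_inv'] using continuousAt_inv₀ hA

theorem det_ne_zero_of_tendsto_inv [l.NeBot] (hF : Tendsto F l (𝓝 A))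
    (hdet : ∀ᶠ s in l, (F s).det ≠ 0) (hinv : Tendsto (fun s => (F s)⁻¹) l (𝓝 L)) :
    A.det ≠ 0 := by
  have hone : A * L = 1 := tendsto_nhds_unique ((hF.mul hinv).congr' (hdet.mono fun s hs =>
    mul_nonsing_inv _ hs.isUnit)) tendsto_const_nhds
  exact (isUnit_det_of_right_inverse hone).ne_zero

/-- No family of vectors with a nonzero limit along `l` is asymptotically annihilated by `F`. Unlike
the invertibility of a limit of `F`, this makes sense at a pole of `F`. -/
def AsymptoticallyInjective (F : ι → Matrix m m ℂ) (l : Filter ι) : Prop :=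
  ∀ (w : ι → m → ℂ) (w₀ : m → ℂ), Tendsto w l (𝓝 w₀) →
    Tendsto (fun s => F s *ᵥ w s) l (𝓝 0) → w₀ = 0

end MatrixLimits

section MeromorphicMatrix

variable {m k p : Type*} {M N : ℂ → Matrix m k ℂ} {a : ℂ}

/-- Entrywise meromorphy at a point; matrices carry no canonical norm, so Mathlib's
`MeromorphicAt` does not apply to them directly. -/
def MatMeromorphicAt (M : ℂ → Matrix m k ℂ) (a : ℂ) : Prop :=
  ∀ i j, MeromorphicAt (fun s => M s i j) a

theorem matMeromorphicAt_const (A : Matrix m k ℂ) : MatMeromorphicAt (fun _ => A) a :=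
  fun _ _ => .const _ _

theorem MatMeromorphicAt.sub (hM : MatMeromorphicAt M a) (hN : MatMeromorphicAt N a) :
    MatMeromorphicAt (fun s => M s - N s) a := fun i j => (hM i j).sub (hN i j)

theorem MatMeromorphicAt.add (hM : MatMeromorphicAt M a) (hN : MatMeromorphicAt N a) :
    MatMeromorphicAt (fun s => M s + N s) a := fun i j => (hM i j).add (hN i j)

theorem MatMeromorphicAt.smul {f : ℂ → ℂ} (hf : MeromorphicAt f a) (hM : MatMeromorphicAt M a) :
    MatMeromorphicAt (fun s => f s • M s) a := fun i j => hf.mul (hM i j)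

theorem MatMeromorphicAt.mul [Fintype k] {N : ℂ → Matrix k p ℂ} (hM : MatMeromorphicAt M a)
    (hN : MatMeromorphicAt N a) : MatMeromorphicAt (fun s => M s * N s) a := fun i j => by
  simp only [mul_apply]
  exact MeromorphicAt.fun_sum fun x _ => (hM i x).mul (hN x j)

theorem MatMeromorphicAt.form {M : ℂ → Matrix m m ℂ} [Fintype m] (hM : MatMeromorphicAt M a)
    (w : m → ℂ) : MeromorphicAt (fun s => star w ⬝ᵥ M s *ᵥ w) a := by
  simp only [dotProduct, mulVec]
  exact MeromorphicAt.fun_sum fun i _ => (MeromorphicAt.const _ _).mul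
    (MeromorphicAt.fun_sum fun j _ => (hM i j).mul (.const _ _))

theorem MatMeromorphicAt.det {M : ℂ → Matrix m m ℂ} [Fintype m] [DecidableEq m]
    (hM : MatMeromorphicAt M a) : MeromorphicAt (fun s => (M s).det) a := by
  simp only [det_apply]
  exact MeromorphicAt.fun_sum fun σ _ =>
    (MeromorphicAt.fun_prod fun i _ => hM (σ i) i).const_smul _

theorem MatMeromorphicAt.inv {M : ℂ → Matrix m m ℂ} [Fintype m] [DecidableEq m]
    (hM : MatMeromorphicAt M a) : MatMeromorphicAt (fun s => (M s)⁻¹) a := by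
  simp only [inv_def, Ring.inverse_eq_inv']
  refine .smul hM.det.inv fun i j => ?_
  simp only [adjugate_apply]
  refine MatMeromorphicAt.det fun i' j' => ?_
  by_cases h : i' = j
  · subst h
    simp only [updateRow_self]
    exact .const _ _
  · simp only [updateRow_ne h]
    exact hM i' j'

theorem MatMeromorphicAt.fromBlocks {m' k' : Type*} {A : ℂ → Matrix m k ℂ} {B : ℂ → Matrix m k' ℂ}
    {C : ℂ → Matrix m' k ℂ} {D : ℂ → Matrix m' k' ℂ} (hA : MatMeromorphicAt A a)
    (hB : MatMeromorphicAt B a) (hC : MatMeromorphicAt C a) (hD : MatMeromorphicAt D a) :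
    MatMeromorphicAt (fun s => fromBlocks (A s) (B s) (C s) (D s)) a := by
  rintro (i | i) (j | j)
  exacts [hA i j, hB i j, hC i j, hD i j]

theorem MatMeromorphicAt.eventually_continuousAt [Finite m] [Finite k]
    (hM : MatMeromorphicAt M a) : ∀ᶠ s in 𝓝[≠] a, ContinuousAt M s := by
  filter_upwards [eventually_all.2 fun i => eventually_all.2 fun j =>
    (hM i j).eventually_continuousAt] with s hs
  exact tendsto_matrix_iff.2 hs

theorem meromorphicAt_eventually_exists_tendsto_pow_mul {f : ℂ → ℂ} (hf : MeromorphicAt f a) :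
    ∀ᶠ r : ℕ in atTop, ∃ c, Tendsto (fun s => (s - a) ^ r * f s) (𝓝[≠] a) (𝓝 c) := by
  obtain ⟨q, hq⟩ := hf
  filter_upwards [eventually_ge_atTop q] with r hr
  have hcont : ContinuousAt (fun s => (s - a) ^ (r - q) * ((s - a) ^ q * f s)) a :=
    ContinuousAt.mul (by fun_prop) hq.continuousAt
  refine ⟨_, (hcont.tendsto.mono_left nhdsWithin_le_nhds).congr fun s => ?_⟩
  rw [← mul_assoc, ← pow_add, Nat.sub_add_cancel hr]

variable [Fintype m] [DecidableEq m]

theorem eq_zero_of_tendsto_pow_smul_inv {F : ℂ → Matrix m m ℂ} {l : Filter ℂ} (hl : l ≤ 𝓝 a)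
    (hdet : ∀ᶠ s in l, (F s).det ≠ 0) (hinj : AsymptoticallyInjective F l)
    {r : ℕ} {L : Matrix m m ℂ} (hL : Tendsto (fun s => (s - a) ^ (r + 1) • (F s)⁻¹) l (𝓝 L)) :
    L = 0 := by
  refine ext_of_mulVec_single fun j => ?_
  rw [zero_mulVec]
  have hcol : Continuous fun A : Matrix m m ℂ => A *ᵥ Pi.single j 1 := by fun_prop
  refine hinj (fun s => ((s - a) ^ (r + 1) • (F s)⁻¹) *ᵥ Pi.single j 1) _
    ((hcol.tendsto L).comp hL) ?_
  have hpow : ContinuousAt (fun s => (s - a) ^ (r + 1) • (Pi.single j 1 : m → ℂ)) a := by fun_prop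
  have hpow0 : Tendsto (fun s => (s - a) ^ (r + 1) • (Pi.single j 1 : m → ℂ)) l (𝓝 0) := by
    simpa using hpow.tendsto.mono_left hl
  refine hpow0.congr' (hdet.mono fun s hs => ?_)
  dsimp only
  rw [smul_mulVec, mulVec_smul, mulVec_mulVec, mul_nonsing_inv _ hs.isUnit, one_mulVec]

-- At the minimal order `r` for which `(s - a) ^ r • (F s)⁻¹` converges, the columns of this
-- matrix are almost-kernel vectors of `F` as soon as `r ≥ 1`.
theorem exists_tendsto_inv_of_asymptoticallyInjective {F : ℂ → Matrix m m ℂ} {l : Filter ℂ}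
    (hl : l ≤ 𝓝[≠] a) (hF : MatMeromorphicAt F a) (hdet : ∀ᶠ s in 𝓝[≠] a, (F s).det ≠ 0)
    (hinj : AsymptoticallyInjective F l) :
    ∃ L, Tendsto (fun s => (F s)⁻¹) (𝓝[≠] a) (𝓝 L) := by
  classical
  have hex : ∃ r : ℕ, ∃ L, Tendsto (fun s => (s - a) ^ r • (F s)⁻¹) (𝓝[≠] a) (𝓝 L) := by
    simp only [exists_tendsto_matrix_iff]
    exact (eventually_all.2 fun i => eventually_all.2 fun j =>
      meromorphicAt_eventually_exists_tendsto_pow_mul (hF.inv i j)).exists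
  obtain ⟨L, hL⟩ := Nat.find_spec hex
  rcases hr : Nat.find hex with _ | r
  · exact ⟨L, by simpa [hr] using hL⟩
  rw [hr] at hL
  have hL0 : L = 0 := eq_zero_of_tendsto_pow_smul_inv (hl.trans nhdsWithin_le_nhds)
    (hdet.filter_mono hl) hinj (hL.mono_left hl)
  refine absurd ?_ (Nat.find_min hex (m := r) (by lia))
  refine exists_tendsto_matrix_iff.2 fun i j => ?_
  have hpole : Tendsto (fun s => (s - a) * ((s - a) ^ r * (F s)⁻¹ i j)) (𝓝[≠] a) (𝓝 0) := by
    refine (tendsto_matrix_iff.1 (hL0 ▸ hL) i j).congr fun s => ?_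
    rw [← mul_assoc, ← pow_succ', Matrix.smul_apply, smul_eq_mul]
  have hmero := hF.inv i j
  obtain ⟨d, hd⟩ := meromorphicAt_exists_tendsto_sub_pole (by fun_prop) hpole
  exact ⟨d, by simpa using hd⟩

end MeromorphicMatrix

section HalfPlaneNI

variable {m k : Type*} [Fintype m] [Fintype k]

/-- Meromorphic matrix functions with the boundary behaviour of a strictly proper negative
imaginary transfer matrix, phrased on the open right half-plane: there `s • M s` is accretive,
with no condition on the imaginary axis. -/
structure HalfPlaneNI (M : ℂ → Matrix m m ℂ) : Prop where
  meromorphicAt : ∀ a, MatMeromorphicAt M a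
  continuousAt : ∀ s ∈ openRHP, ContinuousAt M s
  tendsto_cobounded : ∃ L, Tendsto (fun s => s • M s) (Bornology.cobounded ℂ) (𝓝 L)
  accretive : ∀ s ∈ openRHP, Accretive (s • M s)

theorem differentiableOn_form {M : ℂ → Matrix m m ℂ} (hM : ∀ a, MatMeromorphicAt M a)
    (hcont : ∀ s ∈ openRHP, ContinuousAt M s) (w : m → ℂ) :
    DifferentiableOn ℂ (fun s => star w ⬝ᵥ M s *ᵥ w) openRHP := fun s hs => by
  have hform : Continuous fun A : Matrix m m ℂ => star w ⬝ᵥ A *ᵥ w := by fun_prop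
  exact (((hM s).form w).analyticAt
    (hform.continuousAt.comp (hcont s hs))).differentiableAt.differentiableWithinAt

theorem eventually_neg_lt_re_of_residue {f : ℂ → ℂ} {ω r : ℝ} (hf : MeromorphicAt f (jw ω))
    (hr : 0 ≤ r) (hres : Tendsto (fun s => (s - jw ω) * f s) (𝓝[≠] (jw ω)) (𝓝 (r : ℂ)))
    (haxis : ∃ᶠ ω' in 𝓝[≠] ω, 0 ≤ (f (jw ω')).re) {ε : ℝ} (hε : 0 < ε) :
    ∀ᶠ s in 𝓝[openRHP] (jw ω), -ε < (f s).re := by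
  obtain ⟨d, hd⟩ := meromorphicAt_exists_tendsto_sub_pole hf hres
  have hpole (s : ℂ) : ((s - jw ω)⁻¹ * r).re = s.re / Complex.normSq (s - jw ω) * r := by
    rw [Complex.re_mul_ofReal, Complex.inv_re, Complex.sub_re, jw_re, sub_zero]
  have hd_re : Tendsto (fun s => (f s - (s - jw ω)⁻¹ * r).re) (𝓝[≠] (jw ω)) (𝓝 d.re) :=
    (Complex.continuous_re.tendsto d).comp hd
  have hd_nonneg : 0 ≤ d.re := by
    refine ge_of_tendsto_of_frequently (hd_re.comp (tendsto_jw_nhdsNE ω))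
      (haxis.mono fun ω' h => ?_)
    simpa [hpole, jw_re] using h
  have hlt : -ε < d.re := by linarith
  filter_upwards [nhdsWithin_openRHP_le_nhdsNE ω (hd_re.eventually_const_lt hlt),
    self_mem_nhdsWithin] with s hs hs_mem
  rw [Complex.sub_re, hpole] at hs
  have : 0 ≤ s.re / Complex.normSq (s - jw ω) * r :=
    mul_nonneg (div_nonneg (le_of_lt hs_mem) (Complex.normSq_nonneg _)) hr
  linarith

theorem eventually_neg_lt_re_of_tendsto {α : Type*} {l : Filter α} {f : α → ℂ} {c : ℂ}
    (hf : Tendsto f l (𝓝 c)) (hc : 0 ≤ c.re) {ε : ℝ} (hε : 0 < ε) :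
    ∀ᶠ s in l, -ε < (f s).re :=
  ((Complex.continuous_re.tendsto c).comp hf).eventually_const_lt (by linarith)

theorem tendsto_form {α : Type*} {l : Filter α} {F : α → Matrix m m ℂ} {A : Matrix m m ℂ}
    (hF : Tendsto F l (𝓝 A)) (w : m → ℂ) :
    Tendsto (fun s => star w ⬝ᵥ F s *ᵥ w) l (𝓝 (star w ⬝ᵥ A *ᵥ w)) := by
  have hform : Continuous fun B : Matrix m m ℂ => star w ⬝ᵥ B *ᵥ w := by fun_prop
  exact (hform.tendsto A).comp hF

theorem halfPlaneNI_of_boundary {M : ℂ → Matrix m m ℂ} (hmero : ∀ a, MatMeromorphicAt M a)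
    (hcont : ∀ s ∈ openRHP, ContinuousAt M s)
    (hinf : ∃ L, Accretive L ∧ Tendsto (fun s => s • M s) (Bornology.cobounded ℂ) (𝓝 L))
    (hres : ∀ ω, ∃ R : Matrix m m ℂ, R.PosSemidef ∧
      Tendsto (fun s => (s - jw ω) • s • M s) (𝓝[≠] (jw ω)) (𝓝 R))
    (haxis : ∀ ω, ∃ᶠ ω' in 𝓝[≠] ω, Accretive (jw ω' • M (jw ω'))) : HalfPlaneNI M := by
  obtain ⟨L, hL, hlim⟩ := hinf
  refine ⟨hmero, hcont, ⟨L, hlim⟩, fun s hs w => ?_⟩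
  have hsM (a : ℂ) : MatMeromorphicAt (fun s => s • M s) a := .smul (.id a) (hmero a)
  refine re_nonneg_of_boundary (f := fun s => star w ⬝ᵥ (s • M s) *ᵥ w)
    (differentiableOn_form hsM (fun s hs => continuousAt_id.smul (hcont s hs)) w)
    (fun ω ε hε => ?_) (fun ε hε => ?_) hs
  · obtain ⟨R, hR, hlimR⟩ := hres ω
    refine eventually_neg_lt_re_of_residue ((hsM _).form w) (hR.re_dotProduct_nonneg w) ?_
      ((haxis ω).mono fun ω' h => h w) hε
    rw [RCLike.re_eq_complex_re, ← star_dotProduct_mulVec_eq_re hR.1]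
    refine (tendsto_form hlimR w).congr fun s => ?_
    rw [smul_mulVec, dotProduct_smul, smul_eq_mul]
  · exact (eventually_neg_lt_re_of_tendsto (tendsto_form hlim w) (hL w) hε).filter_mono inf_le_left

theorem posSemidef_of_forall_accretive_smul {A : Matrix m m ℂ}
    (h : ∀ ζ ∈ openRHP, Accretive (ζ • A)) : A.PosSemidef := by
  have hclosed (ζ : ℂ) (hζ : 0 ≤ ζ.re) : Accretive (ζ • A) := by
    have hlim : Tendsto (fun x : ℝ => (ζ + x) • A) (𝓝[>] 0) (𝓝 (ζ • A)) := by
      have : Continuous fun x : ℝ => (ζ + x) • A := by fun_prop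
      simpa using (this.tendsto 0).mono_left nhdsWithin_le_nhds
    refine accretive_of_tendsto hlim (Eventually.frequently ?_)
    filter_upwards [self_mem_nhdsWithin] with x hx
    exact h _ (by simpa [openRHP] using add_pos_of_nonneg_of_pos hζ hx)
  have hA := isHermitian_of_accretive_I_smul (hclosed Complex.I (by simp))
    (hclosed (-Complex.I) (by simp))
  exact (accretive_iff_posSemidef hA).1 (by simpa using hclosed 1 (by simp))

theorem form_fromBlocks_diagonal (A : Matrix m m ℂ) (B : Matrix k k ℂ) (w : m ⊕ k → ℂ) :
    star w ⬝ᵥ fromBlocks A 0 0 B *ᵥ w =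
      star (w ∘ Sum.inl) ⬝ᵥ A *ᵥ (w ∘ Sum.inl) + star (w ∘ Sum.inr) ⬝ᵥ B *ᵥ (w ∘ Sum.inr) := by
  simp only [fromBlocks_mulVec, zero_mulVec, add_zero, zero_add, dotProduct, Fintype.sum_sum_type,
    Sum.elim_inl, Sum.elim_inr, Pi.star_apply, Function.comp_apply]

namespace HalfPlaneNI

variable {M : ℂ → Matrix m m ℂ}

theorem tendsto_cobounded_zero (hM : HalfPlaneNI M) :
    Tendsto M (Bornology.cobounded ℂ) (𝓝 0) := by
  obtain ⟨L, hL⟩ := hM.tendsto_cobounded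
  have h0 : Tendsto (fun s : ℂ => s⁻¹ • s • M s) (Bornology.cobounded ℂ) (𝓝 ((0 : ℂ) • L)) :=
    tendsto_inv₀_cobounded.smul hL
  rw [zero_smul] at h0
  refine h0.congr' ?_
  filter_upwards [Bornology.eventually_ne_cobounded (0 : ℂ)] with s hs
  exact inv_smul_smul₀ hs _

theorem posSemidef_of_tendsto_zero (hM : HalfPlaneNI M) {M₀ : Matrix m m ℂ}
    (h0 : Tendsto M (𝓝[≠] 0) (𝓝 M₀)) : M₀.PosSemidef := by
  refine posSemidef_of_forall_accretive_smul fun ζ hζ => ?_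
  have hray : Tendsto (fun x : ℝ => (x : ℂ) * ζ) (𝓝[>] 0) (𝓝[≠] 0) := by
    have hcont : Continuous fun x : ℝ => (x : ℂ) * ζ := by fun_prop
    refine tendsto_nhdsWithin_iff.2 ⟨by simpa using (hcont.tendsto 0).mono_left nhdsWithin_le_nhds,
      eventually_mem_nhdsWithin.mono fun x (hx : 0 < x) => ?_⟩
    refine mul_ne_zero (by exact_mod_cast hx.ne') fun h => ?_
    simp [openRHP, h] at hζ
  refine accretive_of_tendsto ((h0.comp hray).const_smul ζ) (Eventually.frequently ?_)
  filter_upwards [self_mem_nhdsWithin] with x (hx : 0 < x)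
  refine accretive_of_pos_smul hx ?_
  rw [smul_smul]
  exact hM.accretive (x * ζ) (by simpa [openRHP] using mul_pos hx hζ)

theorem accretive_axis (hM : HalfPlaneNI M) {ω : ℝ} (hω : ContinuousAt M (jw ω)) :
    Accretive (jw ω • M (jw ω)) := by
  have hlim : Tendsto (fun s => s • M s) (𝓝[openRHP] (jw ω)) (𝓝 (jw ω • M (jw ω))) :=
    (continuousAt_id.smul hω).tendsto.mono_left nhdsWithin_le_nhds
  exact accretive_of_tendsto hlim
    (eventually_mem_nhdsWithin.mono fun s => hM.accretive s).frequently

theorem conjTranspose_mul_mul_same (hM : HalfPlaneNI M) (S : Matrix m m ℂ) :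
    HalfPlaneNI fun s => Sᴴ * M s * S := by
  have hcongr : Continuous fun A : Matrix m m ℂ => Sᴴ * A * S := by fun_prop
  obtain ⟨L, hL⟩ := hM.tendsto_cobounded
  have hsmul (s : ℂ) : s • (Sᴴ * M s * S) = Sᴴ * (s • M s) * S := by
    rw [Matrix.mul_smul, Matrix.smul_mul]
  refine ⟨fun a => ((matMeromorphicAt_const _).mul (hM.meromorphicAt a)).mul
    (matMeromorphicAt_const _), fun s hs => hcongr.continuousAt.comp (hM.continuousAt s hs),
    ⟨Sᴴ * L * S, ?_⟩, fun s hs => ?_⟩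
  · simp only [hsmul]
    exact (hcongr.tendsto L).comp hL
  · rw [hsmul]
    exact (hM.accretive s hs).conjTranspose_mul_mul_same S

theorem fromBlocks_diagonal {N : ℂ → Matrix k k ℂ} (hM : HalfPlaneNI M) (hN : HalfPlaneNI N) :
    HalfPlaneNI fun s => fromBlocks (M s) 0 0 (N s) := by
  obtain ⟨L, hL⟩ := hM.tendsto_cobounded
  obtain ⟨L', hL'⟩ := hN.tendsto_cobounded
  have hcont : Continuous fun A : Matrix m m ℂ × Matrix k k ℂ => fromBlocks A.1 0 0 A.2 :=
    continuous_fst.matrix_fromBlocks continuous_const continuous_const continuous_snd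
  have hsmul (s : ℂ) :
      s • fromBlocks (M s) 0 0 (N s) = fromBlocks (s • M s) 0 0 (s • N s) := by
    rw [fromBlocks_smul, smul_zero, smul_zero]
  refine ⟨fun a => (hM.meromorphicAt a).fromBlocks (matMeromorphicAt_const _)
    (matMeromorphicAt_const _) (hN.meromorphicAt a), fun s hs => hcont.continuousAt.comp
    ((hM.continuousAt s hs).prodMk (hN.continuousAt s hs)), ⟨fromBlocks L 0 0 L', ?_⟩,
    fun s hs w => ?_⟩
  · simp only [hsmul]
    exact (hcont.tendsto (L, L')).comp (hL.prodMk_nhds hL')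
  · rw [hsmul, form_fromBlocks_diagonal, Complex.add_re]
    exact add_nonneg (hM.accretive s hs _) (hN.accretive s hs _)

end HalfPlaneNI

end HalfPlaneNI

section Resolvent

variable {m : Type*} [Fintype m] [DecidableEq m] {M : ℂ → Matrix m m ℂ} {B : Matrix m m ℂ}

theorem continuousAt_inv_sub_sub_inv {s : ℂ} (hM : ContinuousAt M s)
    (hdet : (B - M s).det ≠ 0) : ContinuousAt (fun s => (B - M s)⁻¹ - B⁻¹) s :=
  (tendsto_inv_of_det_ne_zero (hM.tendsto.const_sub B) hdet).sub_const _

theorem matMeromorphicAt_inv_sub_sub_inv {a : ℂ} (hM : MatMeromorphicAt M a) :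
    MatMeromorphicAt (fun s => (B - M s)⁻¹ - B⁻¹) a :=
  ((matMeromorphicAt_const B).sub hM).inv.sub (matMeromorphicAt_const _)

namespace HalfPlaneNI

theorem tendsto_smul_inv_sub_sub_inv (hM : HalfPlaneNI M) (hB : B.det ≠ 0) {L : Matrix m m ℂ}
    (hL : Tendsto (fun s => s • M s) (Bornology.cobounded ℂ) (𝓝 L)) :
    Tendsto (fun s => s • ((B - M s)⁻¹ - B⁻¹)) (Bornology.cobounded ℂ) (𝓝 (B⁻¹ * L * B⁻¹)) := by
  have hBM : Tendsto (fun s => B - M s) (Bornology.cobounded ℂ) (𝓝 B) := by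
    simpa using hM.tendsto_cobounded_zero.const_sub B
  refine (((tendsto_inv_of_det_ne_zero hBM hB).mul hL).mul_const B⁻¹).congr' ?_
  filter_upwards [eventually_det_ne_zero hBM hB] with s hs
  rw [inv_sub_sub_inv hB hs, Matrix.mul_smul, Matrix.smul_mul]

theorem det_sub_ne_zero_of_posDef_neg (hM : HalfPlaneNI M) (hB : (-B).PosDef) {s : ℂ}
    (hs : s ∈ openRHP) : (B - M s).det ≠ 0 := by
  refine det_ne_zero_iff_mulVec.2 fun w hw => by_contra fun hne => ?_
  rw [sub_mulVec, sub_eq_zero] at hw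
  have hMw := hM.accretive s hs w
  have hform : (star w ⬝ᵥ (s • M s) *ᵥ w).re = -(s.re * (star w ⬝ᵥ -B *ᵥ w).re) := by
    rw [smul_mulVec, ← hw, ← smul_mulVec, smul_form_re (by simpa using hB.1.neg), neg_mulVec,
      dotProduct_neg, Complex.neg_re, mul_neg, neg_neg]
  have := mul_pos hs (hB.re_dotProduct_pos hne)
  simp only [RCLike.re_eq_complex_re] at this
  linarith

theorem inv_sub_sub_inv_of_posDef_neg (hM : HalfPlaneNI M) (hB : (-B).PosDef) :
    HalfPlaneNI fun s => (B - M s)⁻¹ - B⁻¹ := by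
  have hBH : B.IsHermitian := by simpa using hB.1.neg
  have hBdet : B.det ≠ 0 := by simpa [det_neg] using hB.det_pos.ne'
  obtain ⟨L, hL⟩ := hM.tendsto_cobounded
  refine ⟨fun a => matMeromorphicAt_inv_sub_sub_inv (hM.meromorphicAt a), fun s hs =>
    continuousAt_inv_sub_sub_inv (hM.continuousAt s hs) (hM.det_sub_ne_zero_of_posDef_neg hB hs),
    ⟨_, hM.tendsto_smul_inv_sub_sub_inv hBdet hL⟩, fun s hs => ?_⟩
  refine accretive_smul_inv_sub_sub_inv hBH hBdet (hM.det_sub_ne_zero_of_posDef_neg hB hs)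
    (hM.accretive s hs) (accretive_smul_of_posSemidef ?_ (le_of_lt hs))
  exact nonsing_inv_neg B ▸ hB.inv.posSemidef

theorem exists_tendsto_inv_sub_of_posDef_neg (hM : HalfPlaneNI M) (hB : (-B).PosDef) :
    ∃ L, Tendsto (fun s => (B - M s)⁻¹) (𝓝[≠] 0) (𝓝 L) := by
  have hmero (a : ℂ) := (matMeromorphicAt_const B).sub (hM.meromorphicAt a)
  have hray : Tendsto ((↑) : ℝ → ℂ) (𝓝[>] 0) (𝓝[≠] 0) :=
    tendsto_nhdsWithin_iff.2 ⟨by simpa using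
      (Complex.continuous_ofReal.tendsto 0).mono_left nhdsWithin_le_nhds,
      eventually_mem_nhdsWithin.mono fun x (hx : 0 < x) => Complex.ofReal_ne_zero.2 hx.ne'⟩
  refine exists_tendsto_inv_of_asymptoticallyInjective hray (hmero 0)
    (eventually_ne_zero_of_forall_openRHP (fun a => (hmero a).det)
      (fun s => hM.det_sub_ne_zero_of_posDef_neg hB) 0) fun w w₀ hw hBw => ?_
  rw [tendsto_map'_iff] at hw hBw
  have hlim : Tendsto (fun x : ℝ => (star (w x) ⬝ᵥ -B *ᵥ w x).re
      + (star (w x) ⬝ᵥ (B - M x) *ᵥ w x).re) (𝓝[>] 0) (𝓝 (star w₀ ⬝ᵥ -B *ᵥ w₀).re) := by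
    have hcont : Continuous fun u : (m → ℂ) × (m → ℂ) =>
        (star u.1 ⬝ᵥ -B *ᵥ u.1).re + (star u.1 ⬝ᵥ u.2).re := by fun_prop
    simpa [Function.comp_def] using (hcont.tendsto (w₀, 0)).comp (hw.prodMk_nhds hBw)
  have hle : (star w₀ ⬝ᵥ -B *ᵥ w₀).re ≤ 0 := by
    refine le_of_tendsto hlim (eventually_mem_nhdsWithin.mono fun x (hx : 0 < x) => ?_)
    have hMx := accretive_of_pos_smul hx (hM.accretive x (by simpa [openRHP] using hx)) (w x)
    simp only [sub_mulVec, neg_mulVec, dotProduct_sub, dotProduct_neg, Complex.neg_re,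
      Complex.sub_re]
    linarith
  exact by_contra fun hne => (hB.re_dotProduct_pos hne).not_ge hle

end HalfPlaneNI

end Resolvent

section JuliaInequality

variable {m : Type*} [Fintype m] [DecidableEq m] {M : ℂ → Matrix m m ℂ} {B E M₀ : Matrix m m ℂ}

namespace HalfPlaneNI

theorem det_add_ne_zero_of_posDef (hM : HalfPlaneNI M) (hE : E.PosDef) {s : ℂ}
    (hs : s ∈ openRHP) : (M s + E).det ≠ 0 := by
  have h := hM.det_sub_ne_zero_of_posDef_neg (B := -E) (by rwa [neg_neg]) hs
  rw [← neg_add', add_comm, det_neg] at h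
  exact right_ne_zero_of_mul h

theorem accretive_inv_smul_inv_add (hM : HalfPlaneNI M) (hE : E.PosDef) {s : ℂ}
    (hs : s ∈ openRHP) : Accretive (s⁻¹ • (M s + E)⁻¹) := by
  refine Accretive.inv_smul_inv (ne_zero_of_mem_openRHP hs) ?_
    (hM.det_add_ne_zero_of_posDef hE hs)
  rw [smul_add]
  exact (hM.accretive s hs).add (accretive_smul_of_posSemidef hE.posSemidef (le_of_lt hs))

theorem eventually_accretive_inv_smul_inv_add_axis (hM : HalfPlaneNI M) (hE : E.PosDef)
    (h0 : Tendsto M (𝓝[≠] 0) (𝓝 M₀)) :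
    ∀ᶠ ω in 𝓝[≠] (0 : ℝ), Accretive ((jw ω)⁻¹ • (M (jw ω) + E)⁻¹) := by
  have hdet0 := (PosDef.posSemidef_add (hM.posSemidef_of_tendsto_zero h0) hE).det_pos.ne'
  have hjw : Tendsto jw (𝓝[≠] 0) (𝓝[≠] 0) := by
    simpa only [jw_zero] using tendsto_jw_nhdsNE 0
  filter_upwards [hjw (hM.meromorphicAt 0).eventually_continuousAt,
    hjw (eventually_det_ne_zero (h0.add_const E) hdet0), eventually_mem_nhdsWithin]
    with ω hcont hdet hω
  refine Accretive.inv_smul_inv (by simpa [jw] using hω) ?_ hdet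
  rw [smul_add]
  exact (hM.accretive_axis hcont).add (accretive_smul_of_isHermitian hE.1 (jw_re ω))

theorem tendsto_inv_add_sub_inv_add (hM : HalfPlaneNI M) (hE : E.PosDef)
    (h0 : Tendsto M (𝓝[≠] 0) (𝓝 M₀)) :
    Tendsto (fun s => (M s + E)⁻¹ - (M₀ + E)⁻¹) (𝓝[≠] 0) (𝓝 0) := by
  have hdet := (PosDef.posSemidef_add (hM.posSemidef_of_tendsto_zero h0) hE).det_pos.ne'
  simpa using (tendsto_inv_of_det_ne_zero (h0.add_const E) hdet).sub_const (M₀ + E)⁻¹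

theorem tendsto_inv_smul_inv_add_sub_cobounded (hM : HalfPlaneNI M) (hE : E.PosDef)
    (H : Matrix m m ℂ) :
    Tendsto (fun s => s⁻¹ • ((M s + E)⁻¹ - H)) (Bornology.cobounded ℂ) (𝓝 0) := by
  have hlim : Tendsto (fun s => M s + E) (Bornology.cobounded ℂ) (𝓝 E) := by
    simpa using hM.tendsto_cobounded_zero.add_const E
  simpa using tendsto_inv₀_cobounded.smul
    ((tendsto_inv_of_det_ne_zero hlim hE.det_pos.ne').sub_const H)

theorem continuousAt_inv_smul_inv_add_sub (hM : HalfPlaneNI M) (hE : E.PosDef)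
    (H : Matrix m m ℂ) {s : ℂ} (hs : s ∈ openRHP) :
    ContinuousAt (fun s => s⁻¹ • ((M s + E)⁻¹ - H)) s :=
  (continuousAt_inv₀ (ne_zero_of_mem_openRHP hs)).smul ((tendsto_inv_of_det_ne_zero
    ((hM.continuousAt s hs).tendsto.add_const E) (hM.det_add_ne_zero_of_posDef hE hs)).sub_const H)

/-- A half-plane version of Julia's inequality at the boundary point `0`. -/
theorem accretive_inv_smul_inv_sub_inv (hM : HalfPlaneNI M) (hE : E.PosDef)
    (h0 : Tendsto M (𝓝[≠] 0) (𝓝 M₀)) {s : ℂ} (hs : s ∈ openRHP) :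
    Accretive (s⁻¹ • ((M s + E)⁻¹ - (M₀ + E)⁻¹)) := fun w => by
  have hM₀E : (M₀ + E).PosDef := PosDef.posSemidef_add (hM.posSemidef_of_tendsto_zero h0) hE
  set F : ℂ → Matrix m m ℂ := fun s => s⁻¹ • ((M s + E)⁻¹ - (M₀ + E)⁻¹)
  have hform (s : ℂ) : (star w ⬝ᵥ F s *ᵥ w).re = (star w ⬝ᵥ (s⁻¹ • (M s + E)⁻¹) *ᵥ w).re
      - (s⁻¹).re * (star w ⬝ᵥ (M₀ + E)⁻¹ *ᵥ w).re := by
    rw [← smul_form_re hM₀E.1.inv, ← Complex.sub_re, ← dotProduct_sub, ← sub_mulVec, ← smul_sub]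
  have hmero (a : ℂ) : MatMeromorphicAt F a := .smul (by fun_prop)
    (((hM.meromorphicAt a).add (matMeromorphicAt_const E)).inv.sub (matMeromorphicAt_const _))
  refine re_nonneg_of_boundary
    (differentiableOn_form hmero (fun s => hM.continuousAt_inv_smul_inv_add_sub hE _) w)
    (fun ω ε hε => ?_) (fun ε hε => (eventually_neg_lt_re_of_tendsto (tendsto_form
      (hM.tendsto_inv_smul_inv_add_sub_cobounded hE _) w) (by simp) hε).filter_mono inf_le_left) hs
  rcases eq_or_ne ω 0 with rfl | hω
  · refine eventually_neg_lt_re_of_residue ((hmero _).form w) le_rfl ?_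
      ((hM.eventually_accretive_inv_smul_inv_add_axis hE h0).frequently.mono fun ω h => ?_) hε
    · have hlim := tendsto_form (hM.tendsto_inv_add_sub_inv_add hE h0) w
      simp only [zero_mulVec, dotProduct_zero] at hlim
      simp only [jw_zero, sub_zero]
      refine hlim.congr' (eventually_mem_nhdsWithin.mono fun s (hs : s ≠ 0) => ?_)
      simp only [F, smul_mulVec, dotProduct_smul, smul_eq_mul, mul_inv_cancel_left₀ hs]
    · rw [hform, Complex.inv_re, jw_re, zero_div, zero_mul, sub_zero]
      exact h w
  · have hinv : Tendsto (fun s : ℂ => -(s⁻¹ * (star w ⬝ᵥ (M₀ + E)⁻¹ *ᵥ w).re))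
        (𝓝[openRHP] (jw ω)) (𝓝 (-((jw ω)⁻¹ * (star w ⬝ᵥ (M₀ + E)⁻¹ *ᵥ w).re))) :=
      (((continuousAt_inv₀ (by simpa [jw] using hω)).tendsto.mono_left
        nhdsWithin_le_nhds).mul_const _).neg
    filter_upwards [eventually_neg_lt_re_of_tendsto hinv (by simp [jw_re]) hε,
      eventually_mem_nhdsWithin] with s hs hs_mem
    rw [Complex.neg_re, Complex.re_mul_ofReal] at hs
    rw [hform]
    linarith [hM.accretive_inv_smul_inv_add hE hs_mem w]

theorem accretive_smul_add_sub_conjTranspose_mul_inv_mul (hM : HalfPlaneNI M) (hE : E.PosDef)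
    (h0 : Tendsto M (𝓝[≠] 0) (𝓝 M₀)) {s : ℂ} (hs : s ∈ openRHP) :
    Accretive (s • ((M s + E) - (M s + E)ᴴ * (M₀ + E)⁻¹ * (M s + E))) := by
  have hdet := hM.det_add_ne_zero_of_posDef hE hs
  have hH : ((M₀ + E)⁻¹).IsHermitian := ((hM.posSemidef_of_tendsto_zero h0).1.add hE.1).inv
  have h := ((hM.accretive_inv_smul_inv_sub_inv hE h0 hs).conjTranspose_mul_mul_same
    (s • (M s + E))).conjTranspose
  convert h using 1
  rw [Matrix.mul_smul, Matrix.mul_smul, Matrix.smul_mul, smul_smul,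
    mul_inv_cancel₀ (ne_zero_of_mem_openRHP hs), one_smul, conjTranspose_smul, Matrix.smul_mul,
    Matrix.smul_mul, conjTranspose_smul, star_star, Matrix.mul_sub, Matrix.sub_mul,
    nonsing_inv_mul_cancel_right _ _ hdet.isUnit, conjTranspose_sub,
    conjTranspose_conjTranspose, (isHermitian_conjTranspose_mul_mul _ hH).eq]

theorem det_sub_add_ne_zero_of_posDef (hM : HalfPlaneNI M) (hE : E.PosDef)
    (h0 : Tendsto M (𝓝[≠] 0) (𝓝 M₀)) (hB : B.IsHermitian)
    (hpos : (B * (M₀ + E)⁻¹ * B - B).PosDef) {s : ℂ} (hs : s ∈ openRHP) :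
    (B - (M s + E)).det ≠ 0 := by
  refine det_ne_zero_iff_mulVec.2 fun w hw => by_contra fun hne => ?_
  rw [sub_mulVec, sub_eq_zero] at hw
  have hJulia := hM.accretive_smul_add_sub_conjTranspose_mul_inv_mul hE h0 hs w
  have hform : star w ⬝ᵥ (s • ((M s + E) - (M s + E)ᴴ * (M₀ + E)⁻¹ * (M s + E))) *ᵥ w
      = star w ⬝ᵥ (s • -(B * (M₀ + E)⁻¹ * B - B)) *ᵥ w := by
    have hcongr := star_dotProduct_conj_mulVec (M₀ + E)⁻¹ B w
    rw [hB.eq] at hcongr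
    rw [smul_mulVec, smul_mulVec, dotProduct_smul, dotProduct_smul, sub_mulVec, dotProduct_sub,
      star_dotProduct_conj_mulVec, ← hw, ← hcongr, neg_sub, sub_mulVec, dotProduct_sub]
  rw [hform, smul_form_re (by simpa using hpos.1.neg), neg_mulVec, dotProduct_neg, Complex.neg_re,
    mul_neg] at hJulia
  exact (mul_pos hs (hpos.re_dotProduct_pos hne)).not_ge (by simpa using hJulia)

/-- Adding a small `η • 1` to both `B` and `M` makes the inequality `B⁻¹ ≤ (B - M₀)⁻¹` strict while
leaving `B - M s` unchanged. -/
theorem det_sub_ne_zero_of_nonsingularBelow (hM : HalfPlaneNI M) (hB : B.IsHermitian)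
    (h0 : Tendsto M (𝓝[≠] 0) (𝓝 M₀)) (h : NonsingularBelow B M₀) {s : ℂ} (hs : s ∈ openRHP) :
    (B - M s).det ≠ 0 := by
  have hM₀ := hM.posSemidef_of_tendsto_zero h0
  obtain ⟨hBdet, hBMdet, hle⟩ := (nonsingularBelow_iff_posSemidef_inv_sub_inv hB hM₀).1 h
  obtain ⟨η, hη, hB'det, hlt⟩ := exists_pos_posDef_inv_sub_inv_add hB hBdet
  set E : Matrix m m ℂ := (η : ℂ) • 1
  have hE : E.PosDef := PosDef.one.smul (by exact_mod_cast hη)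
  have hM₀E : (M₀ + E).det ≠ 0 := (PosDef.posSemidef_add hM₀ hE).det_pos.ne'
  have hΔ : ((B - M₀)⁻¹ - (B + E)⁻¹).PosDef := by
    simpa using PosDef.posSemidef_add hle hlt
  have hΔinv : ((B - M₀)⁻¹ - (B + E)⁻¹)⁻¹ = (B + E) * (M₀ + E)⁻¹ * (B + E) - (B + E) := by
    rw [Matrix.inv_sub_inv (by simp only [isUnit_iff_isUnit_det, hBMdet.isUnit, hB'det.isUnit]),
      show B + E - (B - M₀) = M₀ + E by abel, Matrix.mul_inv_rev, Matrix.mul_inv_rev,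
      nonsing_inv_nonsing_inv _ hB'det.isUnit, nonsing_inv_nonsing_inv _ hBMdet.isUnit,
      show B - M₀ = (B + E) - (M₀ + E) by abel, Matrix.mul_sub, Matrix.mul_sub,
      nonsing_inv_mul _ hM₀E.isUnit, Matrix.mul_one, ← Matrix.mul_assoc]
  have := hM.det_sub_add_ne_zero_of_posDef hE h0 (hB.add hE.1) (hΔinv ▸ hΔ.inv) hs
  rwa [add_sub_add_right_eq_sub] at this

end HalfPlaneNI

end JuliaInequality

section StableInverse

variable {m : Type*} [Fintype m] [DecidableEq m]

/-- The punctured neighbourhoods of the points of the closed right half-plane, infinity included.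
A rational matrix lies in `RH∞` when it converges along all of them. -/
def IsStabilityFilter (l : Filter ℂ) : Prop :=
  l = Bornology.cobounded ℂ ∨ ∃ a : ℂ, 0 ≤ a.re ∧ l = 𝓝[≠] a

theorem isStabilityFilter_cobounded : IsStabilityFilter (Bornology.cobounded ℂ) := .inl rfl

theorem isStabilityFilter_nhdsNE {a : ℂ} (ha : 0 ≤ a.re) : IsStabilityFilter (𝓝[≠] a) :=
  .inr ⟨a, ha, rfl⟩

/-- The inverse of `F` exists and converges at all points of the closed right half-plane, infinity
included. -/
def HasStableInverse (F : ℂ → Matrix m m ℂ) : Prop :=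
  ∀ l, IsStabilityFilter l →
    (∀ᶠ s in l, (F s).det ≠ 0) ∧ ∃ L, Tendsto (fun s => (F s)⁻¹) l (𝓝 L)

variable {F M : ℂ → Matrix m m ℂ} {A B M₀ : Matrix m m ℂ}

theorem HasStableInverse.det_ne_zero_of_tendsto (hF : HasStableInverse F) {l : Filter ℂ} [l.NeBot]
    (hl : IsStabilityFilter l) (hA : Tendsto F l (𝓝 A)) : A.det ≠ 0 := by
  obtain ⟨hdet, L, hL⟩ := hF l hl
  exact det_ne_zero_of_tendsto_inv hA hdet hL

namespace HalfPlaneNI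

theorem accretive_of_tendsto_cobounded {m : Type*} [Fintype m] {M : ℂ → Matrix m m ℂ}
    {L : Matrix m m ℂ} (hM : HalfPlaneNI M)
    (hL : Tendsto (fun s => s • M s) (Bornology.cobounded ℂ) (𝓝 L)) : Accretive L := by
  refine accretive_of_tendsto (hL.comp (RCLike.tendsto_ofReal_atTop_cobounded ℂ))
    (Eventually.frequently ?_)
  filter_upwards [eventually_gt_atTop 0] with x hx
  exact hM.accretive x (by simpa [openRHP] using hx)

theorem inv_sub_sub_inv_of_hasStableInverse (hM : HalfPlaneNI M) (hB : B.IsHermitian)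
    (h : HasStableInverse fun s => B - M s) : HalfPlaneNI fun s => (B - M s)⁻¹ - B⁻¹ := by
  have hBdet : B.det ≠ 0 := h.det_ne_zero_of_tendsto isStabilityFilter_cobounded
    (by simpa using hM.tendsto_cobounded_zero.const_sub B)
  obtain ⟨L, hL⟩ := hM.tendsto_cobounded
  refine halfPlaneNI_of_boundary (fun a => matMeromorphicAt_inv_sub_sub_inv (hM.meromorphicAt a))
    (fun s hs => continuousAt_inv_sub_sub_inv (hM.continuousAt s hs) ?_)
    ⟨_, ?_, hM.tendsto_smul_inv_sub_sub_inv hBdet hL⟩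
    (fun ω => ⟨0, .zero, ?_⟩) (fun ω => Eventually.frequently ?_)
  · exact h.det_ne_zero_of_tendsto (isStabilityFilter_nhdsNE (le_of_lt hs))
      ((hM.continuousAt s hs).tendsto.const_sub B |>.mono_left nhdsWithin_le_nhds)
  · simpa [hB.inv.eq] using
      (hM.accretive_of_tendsto_cobounded hL).conjTranspose_mul_mul_same B⁻¹
  · obtain ⟨-, Y, hY⟩ := h _ (isStabilityFilter_nhdsNE (jw_re ω).ge)
    have hid : Tendsto (fun s : ℂ => s) (𝓝[≠] (jw ω)) (𝓝 (jw ω)) := nhdsWithin_le_nhds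
    simpa using (hid.sub_const (jw ω)).smul (hid.smul (hY.sub_const B⁻¹))
  · filter_upwards [tendsto_jw_nhdsNE ω (hM.meromorphicAt (jw ω)).eventually_continuousAt,
      tendsto_jw_nhdsNE ω (h _ (isStabilityFilter_nhdsNE (jw_re ω).ge)).1] with ω' hcont hdet
    exact accretive_smul_inv_sub_sub_inv hB hBdet hdet (hM.accretive_axis hcont)
      (accretive_smul_of_isHermitian hB.inv.neg (jw_re ω'))

theorem nonsingularBelow_of_hasStableInverse (hM : HalfPlaneNI M) (hB : B.IsHermitian)
    (h0 : Tendsto M (𝓝[≠] 0) (𝓝 M₀)) (h : HasStableInverse fun s => B - M s) :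
    NonsingularBelow B M₀ := by
  have hBdet : B.det ≠ 0 := h.det_ne_zero_of_tendsto isStabilityFilter_cobounded
    (by simpa using hM.tendsto_cobounded_zero.const_sub B)
  have hBMdet : (B - M₀).det ≠ 0 :=
    h.det_ne_zero_of_tendsto (isStabilityFilter_nhdsNE le_rfl) (h0.const_sub B)
  refine nonsingularBelow_of_posSemidef_inv_sub_inv hB hBdet hBMdet ?_
  exact (hM.inv_sub_sub_inv_of_hasStableInverse hB h).posSemidef_of_tendsto_zero
    ((tendsto_inv_of_det_ne_zero (h0.const_sub B) hBMdet).sub_const B⁻¹)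

theorem hasStableInverse_of_nonsingularBelow (hM : HalfPlaneNI M) (hB : B.IsHermitian)
    (h0 : Tendsto M (𝓝[≠] 0) (𝓝 M₀)) (h : NonsingularBelow B M₀)
    (haxis : ∀ ω ≠ 0, AsymptoticallyInjective (fun s => B - M s) (𝓝[openRHP] (jw ω))) :
    HasStableInverse fun s => B - M s := by
  obtain ⟨hBdet, hBMdet, -⟩ := (nonsingularBelow_iff_posSemidef_inv_sub_inv hB
    (hM.posSemidef_of_tendsto_zero h0)).1 h
  have hRHP (s : ℂ) (hs : s ∈ openRHP) := hM.det_sub_ne_zero_of_nonsingularBelow hB h0 h hs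
  have of_tendsto {l : Filter ℂ} {A : Matrix m m ℂ} (hl : Tendsto (fun s => B - M s) l (𝓝 A))
      (hA : A.det ≠ 0) : (∀ᶠ s in l, (B - M s).det ≠ 0) ∧
        ∃ L, Tendsto (fun s => (B - M s)⁻¹) l (𝓝 L) :=
    ⟨eventually_det_ne_zero hl hA, _, tendsto_inv_of_det_ne_zero hl hA⟩
  rintro l (rfl | ⟨a, ha, rfl⟩)
  · exact of_tendsto (by simpa using hM.tendsto_cobounded_zero.const_sub B) hBdet
  rcases ha.lt_or_eq with ha | ha
  · exact of_tendsto ((hM.continuousAt a ha).tendsto.const_sub B |>.mono_left nhdsWithin_le_nhds)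
      (hRHP a ha)
  rw [eq_jw_im ha.symm]
  rcases eq_or_ne a.im 0 with hω | hω
  · rw [hω, jw_zero]
    exact of_tendsto (h0.const_sub B) hBMdet
  · have hmero (a : ℂ) := (matMeromorphicAt_const B).sub (hM.meromorphicAt a)
    have hdet := eventually_ne_zero_of_forall_openRHP (fun a => (hmero a).det) hRHP (jw a.im)
    exact ⟨hdet, exists_tendsto_inv_of_asymptoticallyInjective (nhdsWithin_openRHP_le_nhdsNE _)
      (hmero _) hdet (haxis _ hω)⟩

end HalfPlaneNI

end StableInverse

section LoopMatrix

variable {m : Type*} [DecidableEq m]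

/-- The positive feedback loop of the gains `A` and `K`: the equations `y = K u`, `u = A y` read
`loopMatrix A K *ᵥ (y, u) = 0`. -/
def loopMatrix {R : Type*} [Ring R] (A K : Matrix m m R) : Matrix (m ⊕ m) (m ⊕ m) R :=
  fromBlocks (-A) 1 1 (-K)

theorem loopMatrix_sub_fromBlocks {R : Type*} [Ring R] (A K E F : Matrix m m R) :
    loopMatrix A K - fromBlocks E 0 0 F = loopMatrix (A + E) (K + F) := by
  rw [loopMatrix, loopMatrix, sub_eq_add_neg, fromBlocks_neg, fromBlocks_add]
  simp only [neg_zero, add_zero, neg_add]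

theorem isHermitian_loopMatrix {A K : Matrix m m ℂ} (hA : A.IsHermitian) (hK : K.IsHermitian) :
    (loopMatrix A K).IsHermitian :=
  .fromBlocks hA.neg conjTranspose_one hK.neg

variable [Fintype m] {M N : ℂ → Matrix m m ℂ} {A K : Matrix m m ℂ} {ω : ℝ}

theorem comp_inl_eq_zero_of_tendsto_loopMatrix_sub (hA : A.IsHermitian) (hK : K.IsHermitian)
    (hN : HalfPlaneNI N) (hcont : ContinuousAt M (jw ω))
    (hstrict : ∀ u ≠ 0, 0 < (star u ⬝ᵥ (jw ω • M (jw ω)) *ᵥ u).re) {w : ℂ → m ⊕ m → ℂ}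
    {w₀ : m ⊕ m → ℂ} (hw : Tendsto w (𝓝[openRHP] (jw ω)) (𝓝 w₀))
    (hker : Tendsto (fun s => (loopMatrix A K - fromBlocks (M s) 0 0 (N s)) *ᵥ w s)
      (𝓝[openRHP] (jw ω)) (𝓝 0)) : w₀ ∘ Sum.inl = 0 := by
  by_contra hne
  set B := loopMatrix A K
  have hid : Tendsto (fun s : ℂ => s) (𝓝[openRHP] (jw ω)) (𝓝 (jw ω)) := nhdsWithin_le_nhds
  have hlim : Tendsto (fun s => (star (w s ∘ Sum.inl) ⬝ᵥ (s • M s) *ᵥ (w s ∘ Sum.inl)).re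
      + (s * star (w s) ⬝ᵥ (B - fromBlocks (M s) 0 0 (N s)) *ᵥ w s).re
      - s.re * (star (w s) ⬝ᵥ B *ᵥ w s).re) (𝓝[openRHP] (jw ω))
      (𝓝 (star (w₀ ∘ Sum.inl) ⬝ᵥ (jw ω • M (jw ω)) *ᵥ (w₀ ∘ Sum.inl)).re) := by
    have hform : Continuous fun x : (ℂ × Matrix m m ℂ) × (m ⊕ m → ℂ) × (m ⊕ m → ℂ) =>
        (star (x.2.1 ∘ Sum.inl) ⬝ᵥ (x.1.1 • x.1.2) *ᵥ (x.2.1 ∘ Sum.inl)).re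
          + (x.1.1 * star x.2.1 ⬝ᵥ x.2.2).re - x.1.1.re * (star x.2.1 ⬝ᵥ B *ᵥ x.2.1).re := by
      fun_prop
    simpa [Function.comp_def, jw_re] using (hform.tendsto ((jw ω, M (jw ω)), (w₀, 0))).comp
      ((hid.prodMk_nhds (hcont.tendsto.mono_left nhdsWithin_le_nhds)).prodMk_nhds
        (hw.prodMk_nhds hker))
  refine (hstrict _ hne).not_ge (le_of_tendsto hlim (eventually_mem_nhdsWithin.mono fun s hs => ?_))
  have hNs := hN.accretive s hs (w s ∘ Sum.inr)
  rw [← smul_form_re (isHermitian_loopMatrix hA hK), sub_mulVec, dotProduct_sub,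
    form_fromBlocks_diagonal]
  simp only [smul_mulVec, dotProduct_smul, smul_eq_mul, mul_sub, mul_add, Complex.sub_re,
    Complex.add_re] at hNs ⊢
  linarith

theorem asymptoticallyInjective_loopMatrix_sub (hA : A.IsHermitian) (hK : K.IsHermitian)
    (hN : HalfPlaneNI N) (hcont : ContinuousAt M (jw ω))
    (hstrict : ∀ u ≠ 0, 0 < (star u ⬝ᵥ (jw ω • M (jw ω)) *ᵥ u).re) :
    AsymptoticallyInjective (fun s => loopMatrix A K - fromBlocks (M s) 0 0 (N s))
      (𝓝[openRHP] (jw ω)) := by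
  intro w w₀ hw hker
  have hinl := comp_inl_eq_zero_of_tendsto_loopMatrix_sub hA hK hN hcont hstrict hw hker
  have hrow : Tendsto (fun s => -(A + M s) *ᵥ (w s ∘ Sum.inl) + w s ∘ Sum.inr)
      (𝓝[openRHP] (jw ω)) (𝓝 0) := by
    have hcomp : Continuous fun v : m ⊕ m → ℂ => v ∘ Sum.inl := by fun_prop
    refine ((hcomp.tendsto 0).comp hker).congr fun s => ?_
    dsimp only [Function.comp_apply]
    rw [loopMatrix_sub_fromBlocks, loopMatrix, fromBlocks_mulVec, Sum.elim_comp_inl, one_mulVec]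
  have hinr : w₀ ∘ Sum.inr = 0 := by
    have hcomp : Continuous fun x : Matrix m m ℂ × (m ⊕ m → ℂ) =>
      -(A + x.1) *ᵥ (x.2 ∘ Sum.inl) + x.2 ∘ Sum.inr := by fun_prop
    have := tendsto_nhds_unique ((hcomp.tendsto (M (jw ω), w₀)).comp
      ((hcont.tendsto.mono_left nhdsWithin_le_nhds).prodMk_nhds hw)) hrow
    simpa [hinl] using this
  rw [← Sum.elim_comp_inl_inr w₀, hinl, hinr, Sum.elim_zero_zero]

end LoopMatrix

section RationalFunction

variable {f : RatFunc ℝ} {a c : ℂ}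

theorem evalC_eq_div (f : RatFunc ℝ) (s : ℂ) : evalC f s =
    (f.num.map (algebraMap ℝ ℂ)).eval s / (f.denom.map (algebraMap ℝ ℂ)).eval s := by
  rw [evalC, RatFunc.eval, eval_map, eval_map]

theorem isPoleAt_iff_isRoot : IsPoleAt f a ↔ (f.denom.map (algebraMap ℝ ℂ)).IsRoot a := by
  rw [IsPoleAt, IsRoot, eval_map]

theorem eventually_not_isPoleAt (f : RatFunc ℝ) : ∀ᶠ s in cofinite, ¬ IsPoleAt f s := by
  simp only [isPoleAt_iff_isRoot]
  exact eventually_cofinite_not_isRoot ((Polynomial.map_ne_zero_iff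
    (algebraMap ℝ ℂ).injective).2 f.denom_ne_zero)

theorem meromorphicAt_eval (p : ℂ[X]) : MeromorphicAt (fun s => p.eval s) a :=
  (AnalyticOnNhd.eval_polynomial p a trivial).meromorphicAt

theorem meromorphicAt_evalC (f : RatFunc ℝ) (a : ℂ) : MeromorphicAt (evalC f) a := by
  simp only [funext (evalC_eq_div f)]
  exact (meromorphicAt_eval _).div (meromorphicAt_eval _)

theorem meromorphicAt_evalC_inv (f : RatFunc ℝ) : MeromorphicAt (fun z => evalC f z⁻¹) 0 := by
  have hpoly (p : ℂ[X]) : MeromorphicAt (fun z : ℂ => p.eval z⁻¹) 0 := by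
    simp only [eval_eq_sum_range]
    exact .fun_sum fun i => by fun_prop
  simp only [evalC_eq_div]
  exact (hpoly _).div (hpoly _)

theorem continuousAt_evalC (h : ¬ IsPoleAt f a) : ContinuousAt (evalC f) a := by
  rw [isPoleAt_iff_isRoot, IsRoot] at h
  simp only [funext (evalC_eq_div f)]
  exact (Polynomial.continuous _).continuousAt.div (Polynomial.continuous _).continuousAt h

theorem num_eval_ne_zero_of_isPoleAt (h : IsPoleAt f a) :
    (f.num.map (algebraMap ℝ ℂ)).eval a ≠ 0 := by
  intro h0
  obtain ⟨u, v, huv⟩ := f.isCoprime_num_denom.map (mapRingHom (algebraMap ℝ ℂ))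
  have heval := congrArg (eval a) huv
  rw [isPoleAt_iff_isRoot, IsRoot] at h
  rw [coe_mapRingHom, eval_add, eval_mul, eval_mul, h0, h, mul_zero, mul_zero, add_zero,
    eval_one] at heval
  exact zero_ne_one heval

theorem not_isPoleAt_of_tendsto (h : Tendsto (evalC f) (𝓝[≠] a) (𝓝 c)) : ¬ IsPoleAt f a := by
  intro hpole
  have tendsto_eval (p : ℂ[X]) : Tendsto p.eval (𝓝[≠] a) (𝓝 (p.eval a)) :=
    p.continuous.continuousAt.mono_left nhdsWithin_le_nhds
  have hmul := h.mul (tendsto_eval (f.denom.map (algebraMap ℝ ℂ)))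
  rw [isPoleAt_iff_isRoot.1 hpole, mul_zero] at hmul
  refine num_eval_ne_zero_of_isPoleAt hpole (tendsto_nhds_unique (tendsto_eval _)
    (hmul.congr' ?_))
  filter_upwards [nhdsNE_le_cofinite a (eventually_not_isPoleAt f)] with s hs
  rw [evalC_eq_div, div_mul_cancel₀ _ (mt isPoleAt_iff_isRoot.2 hs)]

theorem tendsto_evalC_atInfinity (hf : f.num.degree ≤ f.denom.degree) :
    Tendsto (evalC f) (Bornology.cobounded ℂ) (𝓝 (atInfinity f)) := by
  simp only [funext (evalC_eq_div f)]
  rcases hf.lt_or_eq with hlt | heq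
  · rw [atInfinity, if_neg hlt.ne, Complex.ofReal_zero]
    exact (isLittleO_cobounded_of_degree_lt (by simpa using hlt)).tendsto_div_nhds_zero
  · rw [atInfinity, if_pos heq]
    refine ((isEquivalent_cobounded_leading_monomial.div
      isEquivalent_cobounded_leading_monomial).tendsto_nhds_iff).2 (tendsto_const_nhds.congr' ?_)
    filter_upwards [Bornology.eventually_ne_cobounded 0] with s hs
    simp [natDegree_eq_of_degree_eq heq, mul_div_mul_right _ _ (pow_ne_zero _ hs)]

theorem degree_num_le_of_tendsto_cobounded (h : Tendsto (evalC f) (Bornology.cobounded ℂ) (𝓝 c)) :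
    f.num.degree ≤ f.denom.degree := by
  by_contra! hlt
  have hinv := (isLittleO_cobounded_of_degree_lt (P := f.denom.map (algebraMap ℝ ℂ))
    (Q := f.num.map (algebraMap ℝ ℂ)) (by simpa using hlt)).tendsto_div_nhds_zero
  have hone : Tendsto (fun _ : ℂ => (1 : ℂ)) (Bornology.cobounded ℂ) (𝓝 (c * 0)) := by
    refine (h.mul hinv).congr' ?_
    have hnum : f.num.map (algebraMap ℝ ℂ) ≠ 0 :=
      (Polynomial.map_ne_zero_iff (algebraMap ℝ ℂ).injective).2 (ne_zero_of_degree_gt hlt)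
    filter_upwards [Bornology.le_cofinite ℂ (eventually_not_isPoleAt f),
      Bornology.le_cofinite ℂ (eventually_cofinite_not_isRoot hnum)] with s hden hnum
    rw [evalC_eq_div, div_mul_div_cancel₀ (mt isPoleAt_iff_isRoot.2 hden), div_self hnum]
  simpa using tendsto_nhds_unique hone tendsto_const_nhds

theorem evalC_conj (f : RatFunc ℝ) (s : ℂ) : evalC f (star s) = star (evalC f s) := by
  have heval (p : ℝ[X]) : (p.map (algebraMap ℝ ℂ)).eval (star s) =
      star ((p.map (algebraMap ℝ ℂ)).eval s) := by
    simp [eval_map, eval₂_eq_sum_range]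
  rw [evalC_eq_div, evalC_eq_div, heval, heval, star_div₀]

theorem evalC_C (x : ℝ) (s : ℂ) : evalC (RatFunc.C x) s = x := by simp [evalC]

theorem evalC_neg (f : RatFunc ℝ) (s : ℂ) : evalC (-f) s = -evalC f s := by
  have hcross := congrArg (fun p => (p.map (algebraMap ℝ ℂ)).eval s) (RatFunc.num_denom_neg f)
  simp only [Polynomial.map_mul, Polynomial.map_neg, eval_mul, eval_neg] at hcross
  rw [evalC_eq_div, evalC_eq_div, ← neg_div]
  by_cases hf : IsPoleAt f s
  · have hd := isPoleAt_iff_isRoot.1 hf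
    have hd' : ((-f).denom.map (algebraMap ℝ ℂ)).eval s = 0 := by
      rw [hd, mul_zero, zero_eq_mul] at hcross
      exact hcross.resolve_left (neg_ne_zero.2 (num_eval_ne_zero_of_isPoleAt hf))
    rw [hd, hd', div_zero, div_zero]
  by_cases hf' : IsPoleAt (-f) s
  · have hd := isPoleAt_iff_isRoot.1 hf'
    rw [hd, mul_zero] at hcross
    exact absurd hcross (mul_ne_zero (num_eval_ne_zero_of_isPoleAt hf')
      (mt isPoleAt_iff_isRoot.2 hf))
  · rwa [div_eq_div_iff (mt isPoleAt_iff_isRoot.2 hf') (mt isPoleAt_iff_isRoot.2 hf)]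

theorem eventually_evalC_add (f g : RatFunc ℝ) :
    ∀ᶠ s in cofinite, evalC (f + g) s = evalC f s + evalC g s := by
  filter_upwards [eventually_not_isPoleAt f, eventually_not_isPoleAt g] with s hf hg
  exact RatFunc.eval_add _ _ hf hg

theorem eventually_evalC_mul (f g : RatFunc ℝ) :
    ∀ᶠ s in cofinite, evalC (f * g) s = evalC f s * evalC g s := by
  filter_upwards [eventually_not_isPoleAt f, eventually_not_isPoleAt g] with s hf hg
  exact RatFunc.eval_mul _ _ hf hg

theorem eventually_evalC_ne_zero (hf : f ≠ 0) : ∀ᶠ s in cofinite, evalC f s ≠ 0 := by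
  filter_upwards [eventually_evalC_mul f f⁻¹] with s hs h0
  rw [mul_inv_cancel₀ hf, h0, zero_mul] at hs
  simp [evalC] at hs

theorem eventually_evalC_sum {ι : Type*} (t : Finset ι) (f : ι → RatFunc ℝ) :
    ∀ᶠ s in cofinite, evalC (∑ i ∈ t, f i) s = ∑ i ∈ t, evalC (f i) s := by
  classical
  induction t using Finset.induction_on with
  | empty => simp [evalC]
  | insert i t hi ih =>
    filter_upwards [ih, eventually_evalC_add (f i) (∑ i ∈ t, f i)] with s hs hadd
    rw [Finset.sum_insert hi, Finset.sum_insert hi, hadd, hs]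

end RationalFunction

section RationalMatrix

variable {m : Type*} [Fintype m] {A B : Matrix m m (RatFunc ℝ)}

theorem eventually_evalC_dotProduct (v w : m → RatFunc ℝ) : ∀ᶠ s in cofinite,
    evalC (v ⬝ᵥ w) s = (fun i => evalC (v i) s) ⬝ᵥ fun i => evalC (w i) s := by
  filter_upwards [eventually_evalC_sum Finset.univ fun i => v i * w i,
    eventually_all.2 fun i => eventually_evalC_mul (v i) (w i)] with s hsum hmul
  rw [dotProduct, hsum]
  exact Finset.sum_congr rfl fun i _ => hmul i

theorem eventually_map_evalC_add {k : Type*} [Finite k] (A B : Matrix k k (RatFunc ℝ)) :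
    ∀ᶠ s in cofinite, (A + B).map (evalC · s) = A.map (evalC · s) + B.map (evalC · s) := by
  filter_upwards [eventually_all.2 fun i => eventually_all.2 fun j =>
    eventually_evalC_add (A i j) (B i j)] with s hs
  ext i j
  exact hs i j

theorem eventually_map_evalC_mul (A B : Matrix m m (RatFunc ℝ)) : ∀ᶠ s in cofinite,
    (A * B).map (evalC · s) = A.map (evalC · s) * B.map (evalC · s) := by
  filter_upwards [eventually_all.2 fun i => eventually_all.2 fun j =>
    eventually_evalC_dotProduct (A i) fun k => B k j] with s hs
  ext i j
  exact hs i j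

theorem eventually_map_evalC_mulVec (A : Matrix m m (RatFunc ℝ)) (v : m → RatFunc ℝ) :
    ∀ᶠ s in cofinite, A.map (evalC · s) *ᵥ (fun i => evalC (v i) s) =
      fun i => evalC ((A *ᵥ v) i) s := by
  filter_upwards [eventually_all.2 fun i => eventually_evalC_dotProduct (A i) v] with s hs
  ext i
  exact (hs i).symm

theorem memRHinf_iff_tendsto : MemRHinf A ↔ ∀ l, IsStabilityFilter l →
    ∃ L, Tendsto (fun s => A.map (evalC · s)) l (𝓝 L) := by
  simp only [exists_tendsto_matrix_iff]
  constructor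
  · rintro ⟨hproper, hpole⟩ l (rfl | ⟨a, ha, rfl⟩) i j
    · exact ⟨_, tendsto_evalC_atInfinity (hproper i j)⟩
    · exact ⟨_, (continuousAt_evalC (hpole a ha i j)).mono_left nhdsWithin_le_nhds⟩
  · refine fun h => ⟨fun i j => ?_, fun a ha i j => ?_⟩
    · obtain ⟨c, hc⟩ := h _ isStabilityFilter_cobounded i j
      exact degree_num_le_of_tendsto_cobounded hc
    · obtain ⟨c, hc⟩ := h _ (isStabilityFilter_nhdsNE ha) i j
      exact not_isPoleAt_of_tendsto hc

theorem IsStabilityFilter.le_cofinite {l : Filter ℂ} (hl : IsStabilityFilter l) : l ≤ cofinite := by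
  rcases hl with rfl | ⟨a, -, rfl⟩
  exacts [Bornology.le_cofinite ℂ, nhdsNE_le_cofinite a]

theorem MemRHinf.add (hA : MemRHinf A) (hB : MemRHinf B) : MemRHinf (A + B) := by
  rw [memRHinf_iff_tendsto] at *
  intro l hl
  obtain ⟨K, hK⟩ := hA l hl
  obtain ⟨L, hL⟩ := hB l hl
  refine ⟨K + L, (hK.add hL).congr' ?_⟩
  filter_upwards [hl.le_cofinite (eventually_map_evalC_add A B)] with s hs using hs.symm

theorem MemRHinf.mul (hA : MemRHinf A) (hB : MemRHinf B) : MemRHinf (A * B) := by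
  rw [memRHinf_iff_tendsto] at *
  intro l hl
  obtain ⟨K, hK⟩ := hA l hl
  obtain ⟨L, hL⟩ := hB l hl
  refine ⟨K * L, (hK.mul hL).congr' ?_⟩
  filter_upwards [hl.le_cofinite (eventually_map_evalC_mul A B)] with s hs using hs.symm

theorem memRHinf_map_C (A : Matrix m m ℝ) : MemRHinf (A.map RatFunc.C) := by
  refine memRHinf_iff_tendsto.2 fun l _ => ⟨A.map (↑), ?_⟩
  simpa only [Matrix.map_map, Function.comp_def, evalC_C] using tendsto_const_nhds

variable [DecidableEq m]

theorem eventually_map_evalC_inv (hA : A.det ≠ 0) : ∀ᶠ s in cofinite,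
    (A.map (evalC · s)).det ≠ 0 ∧ A⁻¹.map (evalC · s) = (A.map (evalC · s))⁻¹ := by
  filter_upwards [eventually_map_evalC_mul A A⁻¹] with s hs
  have hone : A.map (evalC · s) * A⁻¹.map (evalC · s) = 1 := by
    rw [← hs, mul_nonsing_inv _ hA.isUnit]
    exact Matrix.map_one _ (by simp [evalC]) (by simp [evalC])
  exact ⟨(isUnit_det_of_right_inverse hone).ne_zero, (inv_eq_right_inv hone).symm⟩

theorem det_ne_zero_of_eventually_map_evalC {l : Filter ℂ} [l.NeBot] (hl : l ≤ cofinite)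
    (h : ∀ᶠ s in l, (A.map (evalC · s)).det ≠ 0) : A.det ≠ 0 := by
  intro hA
  obtain ⟨v, hv, hAv⟩ := exists_mulVec_eq_zero_iff.2 hA
  obtain ⟨i, hi⟩ := Function.ne_iff.1 hv
  obtain ⟨s, hdet, hvi, hmul⟩ := (h.and (hl ((eventually_evalC_ne_zero hi).and
    (eventually_map_evalC_mulVec A v)))).exists
  refine hdet (exists_mulVec_eq_zero_iff.1 ⟨_, Function.ne_iff.2 ⟨i, hvi⟩, hmul.trans ?_⟩)
  ext i
  simp [hAv, evalC]

theorem hasStableInverse_map_evalC_iff :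
    HasStableInverse (fun s => A.map (evalC · s)) ↔ A.det ≠ 0 ∧ MemRHinf A⁻¹ := by
  have hdet (h : HasStableInverse fun s => A.map (evalC · s)) : A.det ≠ 0 :=
    det_ne_zero_of_eventually_map_evalC (Bornology.le_cofinite ℂ)
      (h _ isStabilityFilter_cobounded).1
  refine ⟨fun h => ⟨hdet h, memRHinf_iff_tendsto.2 fun l hl => ?_⟩, fun ⟨hA, h⟩ l hl => ?_⟩
  · obtain ⟨L, hL⟩ := (h l hl).2
    exact ⟨L, hL.congr' (((eventually_map_evalC_inv (hdet h)).filter_mono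
      hl.le_cofinite).mono fun s hs => hs.2.symm)⟩
  · have hinv := (eventually_map_evalC_inv hA).filter_mono hl.le_cofinite
    obtain ⟨L, hL⟩ := memRHinf_iff_tendsto.1 h l hl
    exact ⟨hinv.mono fun s hs => hs.1, L, hL.congr' (hinv.mono fun s hs => hs.2)⟩

end RationalMatrix

section ClosedLoop

variable {m R : Type*} [Fintype m] [DecidableEq m]

theorem loopMatrix_mul_fromBlocks [Ring R] (A K : Matrix m m R) :
    loopMatrix A K * fromBlocks 0 1 1 A = fromBlocks 1 0 (-K) (1 - K * A) := by
  rw [loopMatrix, fromBlocks_multiply]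
  congr 1 <;> noncomm_ring

theorem det_loopMatrix_ne_zero_iff [Field R] {A K : Matrix m m R} :
    (loopMatrix A K).det ≠ 0 ↔ (1 - K * A).det ≠ 0 := by
  have hunit : (fromBlocks (0 : Matrix m m R) 1 1 A).det ≠ 0 := by
    refine (isUnit_det_of_right_inverse (B := fromBlocks (-A) 1 1 0) ?_).ne_zero
    simp [fromBlocks_multiply]
  have hdet := congrArg det (loopMatrix_mul_fromBlocks A K)
  rw [det_mul, det_fromBlocks_zero₁₂, det_one, one_mul] at hdet
  rw [← hdet, mul_ne_zero_iff_right hunit]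

theorem loopMatrix_inv [CommRing R] {A K : Matrix m m R} (h : IsUnit (1 - K * A).det) :
    (loopMatrix A K)⁻¹ = fromBlocks 0 0 1 0 + fromBlocks
      (1 - K * A)⁻¹ ((1 - K * A)⁻¹ * K) (A * (1 - K * A)⁻¹) (A * (1 - K * A)⁻¹ * K) *
        fromBlocks 0 1 1 0 := by
  have hcancel := mul_nonsing_inv _ h
  generalize (1 - K * A)⁻¹ = S at hcancel ⊢
  have hKS : K * (A * S) = S - 1 := by
    rw [← hcancel]
    noncomm_ring
  refine inv_eq_right_inv ?_
  simp only [loopMatrix, fromBlocks_multiply, fromBlocks_add, Matrix.mul_zero, Matrix.mul_one,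
    Matrix.one_mul, add_zero, zero_add, Matrix.neg_mul, Matrix.mul_add]
  rw [← Matrix.mul_assoc K, hKS, ← fromBlocks_one]
  congr 1 <;> first | noncomm_ring | abel

theorem memRHinf_add_mul_swap_iff {T : Matrix (m ⊕ m) (m ⊕ m) (RatFunc ℝ)} :
    MemRHinf (fromBlocks 0 0 1 0 +
      T * (fromBlocks 0 1 1 0 : Matrix (m ⊕ m) (m ⊕ m) (RatFunc ℝ))) ↔ MemRHinf T := by
  have hconst (A B D E : Matrix m m ℝ) : MemRHinf (fromBlocks (A.map RatFunc.C) (B.map RatFunc.C)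
      (D.map RatFunc.C) (E.map RatFunc.C)) := by
    simpa only [fromBlocks_map] using memRHinf_map_C (fromBlocks A B D E)
  have hswap : MemRHinf (fromBlocks 0 1 1 0 : Matrix (m ⊕ m) (m ⊕ m) (RatFunc ℝ)) := by
    simpa using hconst 0 1 1 0
  refine ⟨fun h => ?_, fun h => .add (by simpa using hconst 0 0 1 0) (h.mul hswap)⟩
  have hcorner : MemRHinf (fromBlocks 0 0 (-1) 0 : Matrix (m ⊕ m) (m ⊕ m) (RatFunc ℝ)) := by
    simpa [Matrix.map_neg] using hconst 0 0 (-1) 0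
  convert (hcorner.add h).mul hswap using 1
  rw [← add_assoc, fromBlocks_add]
  simp [Matrix.mul_assoc, fromBlocks_multiply]

theorem feedbackStable_iff_hasStableInverse {P C : Matrix (Fin n) (Fin n) (RatFunc ℝ)} :
    FeedbackStable P C ↔ HasStableInverse fun s => loopMatrix (evalM C s) (evalM P s) := by
  have hloop (s : ℂ) : loopMatrix (evalM C s) (evalM P s) = (loopMatrix C P).map (evalC · s) := by
    rw [loopMatrix, loopMatrix, fromBlocks_map,
      Matrix.map_one _ (by simp [evalC]) (by simp [evalC])]
    congr 1 <;> ext i j <;> exact (evalC_neg _ s).symm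
  simp only [hloop, hasStableInverse_map_evalC_iff, FeedbackStable, ← det_loopMatrix_ne_zero_iff]
  refine and_congr_right fun hdet => ?_
  rw [loopMatrix_inv (det_loopMatrix_ne_zero_iff.1 hdet).isUnit, memRHinf_add_mul_swap_iff]

end ClosedLoop

section NegativeImaginary

variable {G : Matrix (Fin n) (Fin n) (RatFunc ℝ)} {ω : ℝ} {a : ℂ}

theorem jw_neg (ω : ℝ) : jw (-ω) = star (jw ω) := by simp [jw]

theorem evalM_star (G : Matrix (Fin n) (Fin n) (RatFunc ℝ)) (s : ℂ) :
    evalM G (star s) = (evalM G s).map star := by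
  ext i j
  exact evalC_conj (G i j) s

theorem continuousAt_evalM (h : ¬ HasPole G a) : ContinuousAt (evalM G) a :=
  tendsto_matrix_iff.2 fun i j => continuousAt_evalC fun hpole => h ⟨i, j, hpole⟩

theorem eventually_not_hasPole (G : Matrix (Fin n) (Fin n) (RatFunc ℝ)) :
    ∀ᶠ s in cofinite, ¬ HasPole G s := by
  simp only [HasPole, not_exists]
  exact eventually_all.2 fun i => eventually_all.2 fun j => eventually_not_isPoleAt (G i j)

theorem tendsto_evalM_cobounded (hG : Proper G) :
    Tendsto (evalM G) (Bornology.cobounded ℂ) (𝓝 ((evalInf G).map Complex.ofReal)) :=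
  tendsto_matrix_iff.2 fun i j => tendsto_evalC_atInfinity (hG i j)

theorem form_map_star {m : Type*} [Fintype m] (A : Matrix m m ℂ) (w : m → ℂ) :
    star w ⬝ᵥ A.map star *ᵥ w = star (star (star w) ⬝ᵥ A *ᵥ star w) := by
  simp only [dotProduct, mulVec, star_sum, star_mul', map_apply, Pi.star_apply, star_star]

theorem two_mul_form_jw_smul_re (ω : ℝ) (A : Matrix (Fin n) (Fin n) ℂ) (w : Fin n → ℂ) :
    2 * (star w ⬝ᵥ (jw ω • A) *ᵥ w).re = ω * (star w ⬝ᵥ niKer A *ᵥ w).re := by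
  rw [niKer, smul_mulVec, smul_mulVec, sub_mulVec, dotProduct_smul, dotProduct_smul,
    dotProduct_sub, star_dotProduct_conjTranspose_mulVec]
  simp only [jw, smul_eq_mul, Complex.mul_re, Complex.mul_im, Complex.sub_re, Complex.sub_im,
    Complex.ofReal_re, Complex.ofReal_im, Complex.I_re, Complex.I_im, Complex.star_def,
    Complex.conj_re, Complex.conj_im]
  ring

theorem form_jw_neg_smul_evalM_re (ω : ℝ) (w : Fin n → ℂ) :
    (star w ⬝ᵥ (jw (-ω) • evalM G (jw (-ω))) *ᵥ w).re =
      (star (star w) ⬝ᵥ (jw ω • evalM G (jw ω)) *ᵥ star w).re := by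
  have hmap : jw (-ω) • evalM G (jw (-ω)) = (jw ω • evalM G (jw ω)).map star := by
    rw [jw_neg, evalM_star]
    ext i j
    simp
  rw [hmap, form_map_star, Complex.star_def, Complex.conj_re]

theorem IsNI.accretive_jw_smul_evalM (hG : IsNI G) (hω : 0 < ω) (hpole : ¬ HasPole G (jw ω)) :
    Accretive (jw ω • evalM G (jw ω)) := fun w => by
  have := mul_nonneg hω.le ((hG.2.2.1 ω hω hpole).re_dotProduct_nonneg w)
  rw [RCLike.re_eq_complex_re, ← two_mul_form_jw_smul_re] at this
  linarith

theorem IsNI.eventually_accretive_jw_smul_evalM (hG : IsNI G) :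
    ∀ᶠ ω in cofinite, Accretive (jw ω • evalM G (jw ω)) := by
  have hpole : ∀ᶠ ω in cofinite, ¬ HasPole G (jw ω) :=
    jw_injective.tendsto_cofinite (eventually_not_hasPole G)
  filter_upwards [hpole, neg_injective.tendsto_cofinite hpole] with ω hpos hneg
  rcases lt_trichotomy ω 0 with hω | rfl | hω
  · intro w
    rw [← neg_neg ω, form_jw_neg_smul_evalM_re]
    exact hG.accretive_jw_smul_evalM (neg_pos.2 hω) hneg (star w)
  · simp [jw_zero, Accretive]
  · exact hG.accretive_jw_smul_evalM hω hpos

theorem IsNI.isHermitian_evalInf (hG : IsNI G) :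
    ((evalInf G).map Complex.ofReal).IsHermitian := by
  have hI : Accretive (Complex.I • (evalInf G).map Complex.ofReal) := by
    refine accretive_of_tendsto (((tendsto_evalM_cobounded hG.1).comp
      tendsto_jw_atTop).const_smul Complex.I) (Eventually.frequently ?_)
    filter_upwards [atTop_le_cofinite hG.eventually_accretive_jw_smul_evalM,
      eventually_gt_atTop 0] with ω h hω
    refine accretive_of_pos_smul hω ?_
    rwa [smul_smul, mul_comm]
  refine isHermitian_of_accretive_I_smul hI fun w => ?_
  have hmap : -Complex.I • (evalInf G).map Complex.ofReal =
      (Complex.I • (evalInf G).map Complex.ofReal).map star := by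
    ext i j
    simp
  rw [hmap, form_map_star, Complex.star_def, Complex.conj_re]
  exact hI (star w)

theorem IsNI.exists_tendsto_residue_of_nonneg (hG : IsNI G) (hω : 0 ≤ ω) :
    ∃ R : Matrix (Fin n) (Fin n) ℂ, R.PosSemidef ∧
      Tendsto (fun s => (s - jw ω) • s • evalM G s) (𝓝[≠] (jw ω)) (𝓝 R) := by
  have hid : Tendsto (fun s : ℂ => s) (𝓝[≠] (jw ω)) (𝓝 (jw ω)) := nhdsWithin_le_nhds
  by_cases hpole : HasPole G (jw ω)
  · rcases hω.eq_or_lt with rfl | hpos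
    · rw [jw_zero] at hpole ⊢
      obtain ⟨R, hR, hlim⟩ := (hG.2.2.2.2 hpole).2
      exact ⟨R, hR, hlim.congr fun s => by rw [sub_zero, smul_smul, sq]⟩
    · obtain ⟨R, hR, hlim⟩ := hG.2.2.2.1 ω hpos hpole
      have hjw : -Complex.I * jw ω = ω := by simp [jw, ← mul_assoc]
      have hprod := (hid.const_mul (-Complex.I)).smul hlim
      rw [hjw] at hprod
      refine ⟨(ω : ℂ) • R, hR.smul (Complex.zero_le_real.2 hω), hprod.congr fun s => ?_⟩
      simp only [smul_smul]
      congr 1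
      linear_combination (-s * (s - jw ω)) * Complex.I_mul_I
  · refine ⟨0, .zero, ?_⟩
    simpa using (hid.sub_const (jw ω)).smul
      (hid.smul ((continuousAt_evalM hpole).tendsto.mono_left nhdsWithin_le_nhds))

theorem IsNI.exists_tendsto_residue (hG : IsNI G) (ω : ℝ) :
    ∃ R : Matrix (Fin n) (Fin n) ℂ, R.PosSemidef ∧
      Tendsto (fun s => (s - jw ω) • s • evalM G s) (𝓝[≠] (jw ω)) (𝓝 R) := by
  rcases le_total 0 ω with hω | hω
  · exact hG.exists_tendsto_residue_of_nonneg hω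
  obtain ⟨R, hR, hlim⟩ := hG.exists_tendsto_residue_of_nonneg (neg_nonneg.2 hω)
  have hstar : Tendsto star (𝓝[≠] (jw ω)) (𝓝[≠] (jw (-ω))) := by
    rw [jw_neg]
    exact continuous_star.continuousWithinAt.tendsto_nhdsWithin fun _ h => star_injective.ne h
  have hmap : Continuous fun A : Matrix (Fin n) (Fin n) ℂ => A.map star :=
    continuous_id.matrix_map continuous_star
  refine ⟨R.map star, ?_, ((hmap.tendsto R).comp (hlim.comp hstar)).congr fun s => ?_⟩
  · rw [← conjTranspose_transpose, hR.1.eq]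
    exact hR.transpose
  · ext i j
    simp only [Function.comp_apply, Matrix.smul_apply, map_apply, smul_eq_mul, star_mul', star_sub,
      star_star, jw_neg, evalM_star]

theorem exists_tendsto_smul_evalM_sub_evalInf (hG : Proper G) :
    ∃ L, Tendsto (fun s => s • (evalM G s - (evalInf G).map Complex.ofReal))
      (Bornology.cobounded ℂ) (𝓝 L) := by
  refine exists_tendsto_matrix_iff.2 fun i j => ?_
  exact exists_tendsto_mul_cobounded (f := fun s => evalC (G i j) s - atInfinity (G i j))
    ((meromorphicAt_evalC_inv _).sub (.const _ _))
    (by simpa using (tendsto_evalC_atInfinity (hG i j)).sub_const (atInfinity (G i j) : ℂ))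

theorem matMeromorphicAt_evalM (G : Matrix (Fin n) (Fin n) (RatFunc ℝ)) (a : ℂ) :
    MatMeromorphicAt (evalM G) a := fun i j => meromorphicAt_evalC (G i j) a

theorem IsNI.eventually_accretive_jw_smul_evalM_sub_evalInf (hG : IsNI G) : ∀ᶠ ω in cofinite,
    Accretive (jw ω • (evalM G (jw ω) - (evalInf G).map Complex.ofReal)) := by
  filter_upwards [hG.eventually_accretive_jw_smul_evalM] with ω h
  rw [sub_eq_add_neg, smul_add]
  exact h.add (accretive_smul_of_isHermitian hG.isHermitian_evalInf.neg (jw_re ω))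

theorem IsNI.halfPlaneNI_evalM_sub_evalInf (hG : IsNI G) :
    HalfPlaneNI fun s => evalM G s - (evalInf G).map Complex.ofReal := by
  have haxis := hG.eventually_accretive_jw_smul_evalM_sub_evalInf
  refine halfPlaneNI_of_boundary
    (fun a => (matMeromorphicAt_evalM G a).sub (matMeromorphicAt_const _))
    (fun s hs => (continuousAt_evalM (hG.2.1 s hs)).sub continuousAt_const) ?_ (fun ω => ?_)
    (fun ω => (haxis.filter_mono (nhdsNE_le_cofinite ω)).frequently)
  · obtain ⟨L, hL⟩ := exists_tendsto_smul_evalM_sub_evalInf hG.1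
    exact ⟨L, accretive_of_tendsto (hL.comp tendsto_jw_atTop)
      (haxis.filter_mono atTop_le_cofinite).frequently, hL⟩
  · obtain ⟨R, hR, hlim⟩ := hG.exists_tendsto_residue ω
    have hid : Tendsto (fun s : ℂ => s) (𝓝[≠] (jw ω)) (𝓝 (jw ω)) := nhdsWithin_le_nhds
    refine ⟨R, hR, ?_⟩
    simpa [smul_sub] using hlim.sub ((hid.sub_const (jw ω)).smul (hid.smul_const _))

theorem IsSNI.not_hasPole (hG : IsSNI G) (ha : 0 ≤ a.re) : ¬ HasPole G a :=
  fun ⟨i, j, hpole⟩ => hG.1.2 a ha i j hpole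

theorem IsSNI.isNI (hG : IsSNI G) : IsNI G :=
  ⟨hG.1.1, fun _ hs => hG.not_hasPole hs.le, fun ω hω _ => (hG.2 ω hω).posSemidef,
    fun ω _ hpole => absurd hpole (hG.not_hasPole (jw_re ω).ge),
    fun hpole => absurd hpole (hG.not_hasPole le_rfl)⟩

theorem IsSNI.form_jw_smul_evalM_re_pos (hG : IsSNI G) (hω : ω ≠ 0) {w : Fin n → ℂ} (hw : w ≠ 0) :
    0 < (star w ⬝ᵥ (jw ω • evalM G (jw ω)) *ᵥ w).re := by
  have hpos {ν : ℝ} (hν : 0 < ν) {v : Fin n → ℂ} (hv : v ≠ 0) :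
      0 < (star v ⬝ᵥ (jw ν • evalM G (jw ν)) *ᵥ v).re := by
    have := mul_pos hν ((hG.2 ν hν).re_dotProduct_pos hv)
    rw [RCLike.re_eq_complex_re, ← two_mul_form_jw_smul_re] at this
    linarith
  rcases hω.lt_or_gt with hneg | hω
  · rw [← neg_neg ω, form_jw_neg_smul_evalM_re]
    exact hpos (neg_pos.2 hneg) (star_ne_zero.2 hw)
  · exact hpos hω hw

theorem IsSNI.form_jw_smul_evalM_sub_evalInf_re_pos (hG : IsSNI G) (hω : ω ≠ 0) {w : Fin n → ℂ}
    (hw : w ≠ 0) :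
    0 < (star w ⬝ᵥ (jw ω • (evalM G (jw ω) - (evalInf G).map Complex.ofReal)) *ᵥ w).re := by
  rw [smul_sub, sub_mulVec, dotProduct_sub, Complex.sub_re,
    smul_form_re hG.isNI.isHermitian_evalInf, jw_re, zero_mul, sub_zero]
  exact hG.form_jw_smul_evalM_re_pos hω hw

end NegativeImaginary

section LoopShift

variable {m R : Type*} [Fintype m] [DecidableEq m]

/-- The gain `(1 + p * Q)⁻¹ * p` of the plant `p` under negative feedback `Q`, written in a form
that displays it as a Hermitian congruence of `(Q⁻¹ + p)⁻¹`, up to a constant. The loop of `p` with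
a controller `c` is equivalent to the loop of `loopShift Q p` with `c + Q`, but `loopShift Q p`
stays finite where `p` has a pole. -/
def loopShift [CommRing R] (Q p : Matrix m m R) : Matrix m m R :=
  Q⁻¹ - Q⁻¹ * (Q⁻¹ + p)⁻¹ * Q⁻¹

theorem det_one_add_mul_ne_zero [Field R] {Q p : Matrix m m R} (hQ : Q.det ≠ 0)
    (hp : (Q⁻¹ + p).det ≠ 0) : (1 + Q * p).det ≠ 0 := by
  have hfactor : 1 + Q * p = Q * (Q⁻¹ + p) := by
    rw [Matrix.mul_add, mul_nonsing_inv _ hQ.isUnit]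
  rw [hfactor, det_mul]
  exact mul_ne_zero hQ hp

theorem loopShift_mul_one_add [Field R] {Q p : Matrix m m R} (hQ : Q.det ≠ 0)
    (hp : (Q⁻¹ + p).det ≠ 0) : loopShift Q p * (1 + Q * p) = p := by
  have hQ' := nonsing_inv_mul Q hQ.isUnit
  have hp' := nonsing_inv_mul _ hp.isUnit
  calc loopShift Q p * (1 + Q * p)
      = Q⁻¹ + Q⁻¹ * Q * p - Q⁻¹ * ((Q⁻¹ + p)⁻¹ * (Q⁻¹ + Q⁻¹ * Q * p)) := by
        rw [loopShift]
        noncomm_ring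
    _ = p := by rw [hQ', Matrix.one_mul, hp', Matrix.mul_one, add_sub_cancel_left]

theorem one_add_mul_loopShift [Field R] {Q p : Matrix m m R} (hQ : Q.det ≠ 0)
    (hp : (Q⁻¹ + p).det ≠ 0) : (1 + p * Q) * loopShift Q p = p := by
  have hQ' := mul_nonsing_inv Q hQ.isUnit
  have hp' := mul_nonsing_inv _ hp.isUnit
  calc (1 + p * Q) * loopShift Q p
      = Q⁻¹ + p * (Q * Q⁻¹) - (Q⁻¹ + p * (Q * Q⁻¹)) * (Q⁻¹ + p)⁻¹ * Q⁻¹ := by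
        rw [loopShift]
        noncomm_ring
    _ = p := by rw [hQ', Matrix.mul_one, hp', Matrix.one_mul, add_sub_cancel_left]

theorem one_sub_add_mul_mul_one_add [Ring R] {c k p Q : Matrix m m R}
    (h : k * (1 + Q * p) = p) : (1 - (c + Q) * k) * (1 + Q * p) = 1 - c * p := by
  rw [Matrix.sub_mul, Matrix.mul_assoc, h]
  noncomm_ring

theorem one_add_mul_one_sub_mul_add [Ring R] {c k p Q : Matrix m m R}
    (h : (1 + p * Q) * k = p) : (1 + p * Q) * (1 - k * (c + Q)) = 1 - p * c := by
  rw [Matrix.mul_sub, ← Matrix.mul_assoc, h]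
  noncomm_ring

theorem det_one_sub_loopShift_mul_add_ne_zero_iff [Field R] {A D Q : Matrix m m R}
    (hQ : Q.det ≠ 0) (hD : (Q⁻¹ + D).det ≠ 0) :
    (1 - loopShift Q D * (A + Q)).det ≠ 0 ↔ (1 - D * A).det ≠ 0 := by
  have hunit : (1 + D * Q).det ≠ 0 := by
    rw [det_one_add_mul_comm]
    exact det_one_add_mul_ne_zero hQ hD
  rw [← one_add_mul_one_sub_mul_add (one_add_mul_loopShift hQ hD), det_mul,
    mul_ne_zero_iff_left hunit]

theorem inv_one_sub_add_mul_loopShift [Field R] {D Q : Matrix m m R} (A : Matrix m m R)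
    (hQ : Q.det ≠ 0) (hD : (Q⁻¹ + D).det ≠ 0) :
    (1 - (A + Q) * loopShift Q D)⁻¹ = (1 + Q * D) * (1 - A * D)⁻¹ := by
  rw [← one_sub_add_mul_mul_one_add (loopShift_mul_one_add hQ hD), Matrix.mul_inv_rev,
    mul_nonsing_inv_cancel_left _ _ (det_one_add_mul_ne_zero hQ hD).isUnit]

theorem add_mul_loopShift_sub_one [Field R] {D Q : Matrix m m R} (A : Matrix m m R)
    (hQ : Q.det ≠ 0) (hD : (Q⁻¹ + D).det ≠ 0) :
    (A + Q) * loopShift Q D - 1 = (A * D - 1) * (1 + Q * D)⁻¹ := by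
  rw [← neg_sub 1 (A * D), ← one_sub_add_mul_mul_one_add (loopShift_mul_one_add hQ hD),
    Matrix.neg_mul, mul_nonsing_inv_cancel_right _ _ (det_one_add_mul_ne_zero hQ hD).isUnit,
    neg_sub]

theorem isHermitian_loopShift [CommRing R] [StarRing R] {D Q : Matrix m m R}
    (hQ : Q.IsHermitian) (hD : D.IsHermitian) : (loopShift Q D).IsHermitian :=
  hQ.inv.sub (by simpa only [hQ.inv.eq] using
    isHermitian_mul_mul_conjTranspose Q⁻¹ (hQ.inv.add hD).inv)

theorem tendsto_loop_gain {ι : Type*} {A₀ D K₀ Q : Matrix m m ℂ} {c p : ι → Matrix m m ℂ}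
    {l : Filter ι} (hQ : Q.det ≠ 0) (hD : (Q⁻¹ + D).det ≠ 0)
    (hp : ∀ᶠ s in l, (Q⁻¹ + p s).det ≠ 0) (hc : Tendsto c l (𝓝 A₀))
    (hk : Tendsto (fun s => loopShift Q (p s)) l (𝓝 K₀)) (hdet : (1 - A₀ * D).det ≠ 0) :
    Tendsto (fun s => (1 + Q * D) * (1 - c s * D)⁻¹ * (c s * p s - 1) * (1 + Q * p s)⁻¹) l
      (𝓝 ((1 - (A₀ + Q) * loopShift Q D)⁻¹ * ((A₀ + Q) * K₀ - 1))) := by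
  rw [inv_one_sub_add_mul_loopShift A₀ hQ hD]
  have hinv := tendsto_inv_of_det_ne_zero ((hc.mul_const D).const_sub 1) hdet
  refine ((hinv.const_mul (1 + Q * D)).mul
    (((hc.add_const Q).mul hk).sub_const 1)).congr' (hp.mono fun s hs => ?_)
  rw [add_mul_loopShift_sub_one _ hQ hs, ← Matrix.mul_assoc]

theorem loopMatrix_add_mul_eq_one [CommRing R] {c k p Q : Matrix m m R}
    (h : k * (1 + Q * p) = p) (hdet : IsUnit (loopMatrix c p).det) :
    loopMatrix (c + Q) k * (fromBlocks 1 0 Q 1 * (loopMatrix c p)⁻¹ * fromBlocks 1 Q 0 1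
      - fromBlocks 0 0 0 Q) = 1 := by
  have hfactor : loopMatrix (c + Q) k * fromBlocks 1 0 Q 1 =
      fromBlocks 1 0 0 (1 - k * Q) * loopMatrix c p := by
    have hk : (1 - k * Q) * p = k := by
      nth_rewrite 1 [Matrix.sub_mul, Matrix.one_mul, ← h]
      noncomm_ring
    simp only [loopMatrix, fromBlocks_multiply, Matrix.mul_neg, hk]
    congr 1 <;> noncomm_ring
  rw [Matrix.mul_sub, ← Matrix.mul_assoc, ← Matrix.mul_assoc, hfactor,
    mul_nonsing_inv_cancel_right _ _ hdet]
  simp only [loopMatrix, fromBlocks_multiply, sub_eq_add_neg, fromBlocks_neg, fromBlocks_add]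
  rw [← fromBlocks_one]
  congr 1 <;> noncomm_ring

theorem HasStableInverse.loopMatrix_add {c k p : ℂ → Matrix m m ℂ} {Q : Matrix m m ℂ}
    (h : HasStableInverse fun s => loopMatrix (c s) (p s))
    (hk : ∀ l, IsStabilityFilter l → ∀ᶠ s in l, k s * (1 + Q * p s) = p s) :
    HasStableInverse fun s => loopMatrix (c s + Q) (k s) := by
  intro l hl
  obtain ⟨hdet, L, hL⟩ := h l hl
  have hone : ∀ᶠ s in l, loopMatrix (c s + Q) (k s) *
      (fromBlocks 1 0 Q 1 * (loopMatrix (c s) (p s))⁻¹ * fromBlocks 1 Q 0 1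
        - fromBlocks 0 0 0 Q) = 1 := by
    filter_upwards [hdet, hk l hl] with s hs hks
    exact loopMatrix_add_mul_eq_one hks hs.isUnit
  refine ⟨hone.mono fun s hs => (isUnit_det_of_right_inverse hs).ne_zero, _,
    (((hL.const_mul (fromBlocks 1 0 Q 1)).mul_const (fromBlocks 1 Q 0 1)).sub_const
      (fromBlocks 0 0 0 Q)).congr' (hone.mono fun s hs => ?_)⟩
  exact (inv_eq_right_inv hs).symm

theorem hasStableInverse_loopMatrix_add_loopShift_iff {c p : ℂ → Matrix m m ℂ}
    {Q : Matrix m m ℂ} (hQ : Q.det ≠ 0)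
    (hp : ∀ l, IsStabilityFilter l → ∀ᶠ s in l, (Q⁻¹ + p s).det ≠ 0) :
    HasStableInverse (fun s => loopMatrix (c s + Q) (loopShift Q (p s))) ↔
      HasStableInverse fun s => loopMatrix (c s) (p s) := by
  refine ⟨fun h => ?_, fun h => h.loopMatrix_add fun l hl =>
    (hp l hl).mono fun s hs => loopShift_mul_one_add hQ hs⟩
  have hback (l : Filter ℂ) (hl : IsStabilityFilter l) :
      ∀ᶠ s in l, p s * (1 + -Q * loopShift Q (p s)) = loopShift Q (p s) := by
    filter_upwards [hp l hl] with s hs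
    have := one_add_mul_loopShift hQ hs
    rw [Matrix.add_mul, Matrix.one_mul] at this
    rw [Matrix.mul_add, Matrix.mul_one, Matrix.neg_mul, Matrix.mul_neg, ← Matrix.mul_assoc,
      ← sub_eq_add_neg, sub_eq_iff_eq_add, this]
  simpa only [add_neg_cancel_right] using h.loopMatrix_add hback

end LoopShift

namespace HalfPlaneNI

variable {m : Type*} [Fintype m] [DecidableEq m] {M : ℂ → Matrix m m ℂ} {D Q : Matrix m m ℂ}

theorem eventually_det_add_ne_zero (hM : HalfPlaneNI M) (hD : D.PosDef) {l : Filter ℂ}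
    (hl : IsStabilityFilter l) : ∀ᶠ s in l, (D + M s).det ≠ 0 := by
  rcases hl with rfl | ⟨a, -, rfl⟩
  · exact eventually_det_ne_zero (by simpa using hM.tendsto_cobounded_zero.const_add D)
      hD.det_pos.ne'
  · refine eventually_ne_zero_of_forall_openRHP
      (fun a => ((matMeromorphicAt_const D).add (hM.meromorphicAt a)).det) (fun s hs => ?_) a
    rw [add_comm]
    exact hM.det_add_ne_zero_of_posDef hD hs

theorem loopShift_sub_loopShift (hM : HalfPlaneNI M) (hQ : Q.IsHermitian)
    (hD : (Q⁻¹ + D).PosDef) : HalfPlaneNI fun s => loopShift Q (D + M s) - loopShift Q D := by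
  have h := (hM.inv_sub_sub_inv_of_posDef_neg (B := -(Q⁻¹ + D))
    (by rwa [neg_neg])).conjTranspose_mul_mul_same Q⁻¹
  convert h using 2 with s
  rw [hQ.inv.eq, ← neg_add', nonsing_inv_neg, nonsing_inv_neg, add_assoc, loopShift, loopShift]
  noncomm_ring

theorem exists_tendsto_loopShift (hM : HalfPlaneNI M) (hD : (Q⁻¹ + D).PosDef) :
    ∃ K, Tendsto (fun s => loopShift Q (D + M s)) (𝓝[≠] 0) (𝓝 K) := by
  obtain ⟨L, hL⟩ := hM.exists_tendsto_inv_sub_of_posDef_neg (B := -(Q⁻¹ + D)) (by rwa [neg_neg])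
  refine ⟨_, (((hL.const_mul Q⁻¹).mul_const Q⁻¹).const_add Q⁻¹).congr fun s => ?_⟩
  rw [← neg_add', nonsing_inv_neg, add_assoc, loopShift]
  noncomm_ring

end HalfPlaneNI

section LoopCriterion

theorem posSemidef_fromBlocks_diagonal {m k : Type*} [Finite m] [Finite k] {E : Matrix m m ℂ}
    {F : Matrix k k ℂ} (hE : E.PosSemidef) (hF : F.PosSemidef) :
    (fromBlocks E 0 0 F).PosSemidef := by
  have := Fintype.ofFinite m
  have := Fintype.ofFinite k
  refine .of_dotProduct_mulVec_nonneg (hE.1.fromBlocks conjTranspose_zero hF.1) fun w => ?_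
  rw [form_fromBlocks_diagonal]
  exact add_nonneg (hE.dotProduct_mulVec_nonneg _) (hF.dotProduct_mulVec_nonneg _)

variable {m : Type*} [Fintype m] [DecidableEq m] {A K E F : Matrix m m ℂ}

theorem nonsingularBelow_loopMatrix_fromBlocks_iff (hA : A.IsHermitian) (hK : K.IsHermitian)
    (hE : E.PosSemidef) (hF : F.PosSemidef) :
    NonsingularBelow (loopMatrix A K) (fromBlocks E 0 0 F) ↔
      (∀ t ∈ Set.Icc (0 : ℝ) 1, (1 - K * (A + (t : ℂ) • E)).det ≠ 0) ∧
        ∀ t ∈ Set.Icc (0 : ℝ) 1, (1 - (A + E) * (K + (t : ℂ) • F)).det ≠ 0 := by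
  have hsplit : fromBlocks E 0 0 F = fromBlocks E 0 0 0 + fromBlocks 0 0 0 F := by
    simp [fromBlocks_add]
  have hE0 := posSemidef_fromBlocks_diagonal hE (.zero (n := m) (R := ℂ))
  have h0F := posSemidef_fromBlocks_diagonal (.zero (n := m) (R := ℂ)) hF
  have hloop := isHermitian_loopMatrix hA hK
  rw [hsplit, nonsingularBelow_add_iff hloop hE0 h0F, nonsingularBelow_iff_segment hloop hE0,
    nonsingularBelow_iff_segment (hloop.sub hE0.1) h0F]
  simp only [fromBlocks_smul, smul_zero, loopMatrix_sub_fromBlocks, det_loopMatrix_ne_zero_iff,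
    add_zero, det_one_sub_mul_comm (A + E)]

theorem hasStableInverse_loopMatrix_add_iff {M N : ℂ → Matrix m m ℂ} (hA : A.IsHermitian)
    (hK : K.IsHermitian) (hM : HalfPlaneNI M) (hN : HalfPlaneNI N)
    (hM0 : Tendsto M (𝓝[≠] 0) (𝓝 E)) (hN0 : Tendsto N (𝓝[≠] 0) (𝓝 F))
    (hcont : ∀ ω ≠ 0, ContinuousAt M (jw ω))
    (hstrict : ∀ ω ≠ 0, ∀ u ≠ 0, 0 < (star u ⬝ᵥ (jw ω • M (jw ω)) *ᵥ u).re) :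
    HasStableInverse (fun s => loopMatrix (A + M s) (K + N s)) ↔
      (∀ t ∈ Set.Icc (0 : ℝ) 1, (1 - K * (A + (t : ℂ) • E)).det ≠ 0) ∧
        ∀ t ∈ Set.Icc (0 : ℝ) 1, (1 - (A + E) * (K + (t : ℂ) • F)).det ≠ 0 := by
  have hMN := hM.fromBlocks_diagonal hN
  have hMN0 : Tendsto (fun s => fromBlocks (M s) 0 0 (N s)) (𝓝[≠] 0) (𝓝 (fromBlocks E 0 0 F)) := by
    have hblocks : Continuous fun X : Matrix m m ℂ × Matrix m m ℂ => fromBlocks X.1 0 0 X.2 :=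
      continuous_fst.matrix_fromBlocks continuous_const continuous_const continuous_snd
    exact (hblocks.tendsto (E, F)).comp (hM0.prodMk_nhds hN0)
  have hloop := isHermitian_loopMatrix hA hK
  rw [← nonsingularBelow_loopMatrix_fromBlocks_iff hA hK (hM.posSemidef_of_tendsto_zero hM0)
    (hN.posSemidef_of_tendsto_zero hN0)]
  simp only [← loopMatrix_sub_fromBlocks]
  exact ⟨hMN.nonsingularBelow_of_hasStableInverse hloop hMN0, fun h =>
    hMN.hasStableInverse_of_nonsingularBelow hloop hMN0 h fun ω hω =>
      asymptoticallyInjective_loopMatrix_sub hA hK hN (hcont ω hω) (hstrict ω hω)⟩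

end LoopCriterion

section Plant

variable {P C : Matrix (Fin n) (Fin n) (RatFunc ℝ)} {Q D A₀ K₀ : Matrix (Fin n) (Fin n) ℂ}

theorem det_ne_zero_and_eigsRealAndLT_iff {A : Matrix (Fin n) (Fin n) ℂ} (hD : D.IsHermitian)
    (hA : A.IsHermitian) (hA₀ : (A₀ - A).PosSemidef) :
    ((1 - D * A).det ≠ 0 ∧ eigsRealAndLT ((1 - D * A)⁻¹ * (D * A₀ - 1)) 0) ↔
      ∀ t ∈ Set.Icc (0 : ℝ) 1, (1 - D * (A + (t : ℂ) • (A₀ - A))).det ≠ 0 := by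
  have hiff (hdet : (1 - D * A).det ≠ 0) := add_sub_cancel A A₀ ▸
    eigsRealAndLT_iff_det_one_sub_mul_ne_zero hD hA hA₀ hdet
  refine ⟨fun ⟨hdet, heig⟩ => (hiff hdet).1 heig, fun h => ?_⟩
  have hdet : (1 - D * A).det ≠ 0 := by simpa using h 0 ⟨le_rfl, zero_le_one⟩
  exact ⟨hdet, (hiff hdet).2 h⟩

theorem exists_tendsto_eigsRealAndLT_iff {c p : ℂ → Matrix (Fin n) (Fin n) ℂ} {l : Filter ℂ}
    [l.NeBot] (hQ : Q.PosDef) (hD : D.IsHermitian) (hQD : (Q⁻¹ + D).det ≠ 0)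
    (hA₀ : A₀.IsHermitian) (hK₀ : (K₀ - loopShift Q D).PosSemidef)
    (hp : ∀ᶠ s in l, (Q⁻¹ + p s).det ≠ 0) (hc : Tendsto c l (𝓝 A₀))
    (hk : Tendsto (fun s => loopShift Q (p s)) l (𝓝 K₀)) (hdet : (1 - A₀ * D).det ≠ 0) :
    (∃ L, Tendsto (fun s => (1 + Q * D) * (1 - c s * D)⁻¹ * (c s * p s - 1) * (1 + Q * p s)⁻¹) l
      (𝓝 L) ∧ eigsRealAndLT L 0) ↔ ∀ t ∈ Set.Icc (0 : ℝ) 1,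
        (1 - (A₀ + Q) * (loopShift Q D + (t : ℂ) • (K₀ - loopShift Q D))).det ≠ 0 := by
  have hQdet := hQ.det_pos.ne'
  have hlim := tendsto_loop_gain hQdet hQD hp hc hk hdet
  have hdet' : (1 - (A₀ + Q) * loopShift Q D).det ≠ 0 := by
    rw [det_one_sub_mul_comm, det_one_sub_loopShift_mul_add_ne_zero_iff hQdet hQD,
      det_one_sub_mul_comm]
    exact hdet
  rw [← eigsRealAndLT_iff_det_one_sub_mul_ne_zero (hA₀.add hQ.1)
    (isHermitian_loopShift hQ.1 hD) hK₀ hdet', add_sub_cancel]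
  exact ⟨fun ⟨L, hL, hlt⟩ => tendsto_nhds_unique hL hlim ▸ hlt, fun h => ⟨_, hlim, h⟩⟩

theorem IsNI.eventually_det_inv_add_evalM_ne_zero (hP : IsNI P)
    (hQP : (Q⁻¹ + (evalInf P).map Complex.ofReal).PosDef) {l : Filter ℂ}
    (hl : IsStabilityFilter l) : ∀ᶠ s in l, (Q⁻¹ + evalM P s).det ≠ 0 := by
  simpa using hP.halfPlaneNI_evalM_sub_evalInf.eventually_det_add_ne_zero hQP hl

theorem IsNI.halfPlaneNI_loopShift_sub_loopShift (hP : IsNI P) (hQ : Q.IsHermitian)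
    (hQP : (Q⁻¹ + (evalInf P).map Complex.ofReal).PosDef) : HalfPlaneNI fun s =>
      loopShift Q (evalM P s) - loopShift Q ((evalInf P).map Complex.ofReal) := by
  simpa using hP.halfPlaneNI_evalM_sub_evalInf.loopShift_sub_loopShift hQ hQP

theorem IsSNI.tendsto_evalM_zero (hC : IsSNI C) : Tendsto (evalM C) (𝓝[≠] 0) (𝓝 (evalM C 0)) :=
  (continuousAt_evalM (hC.not_hasPole le_rfl)).tendsto.mono_left nhdsWithin_le_nhds

theorem feedbackStable_iff_det_ne_zero (hP : IsNI P) (hC : IsSNI C) (hQ : Q.PosDef)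
    (hQP : (Q⁻¹ + (evalInf P).map Complex.ofReal).PosDef)
    (hK₀ : Tendsto (fun s => loopShift Q (evalM P s)) (𝓝[≠] 0) (𝓝 K₀)) :
    FeedbackStable P C ↔
      (∀ t ∈ Set.Icc (0 : ℝ) 1, (1 - (evalInf P).map Complex.ofReal *
        ((evalInf C).map Complex.ofReal + (t : ℂ) •
          (evalM C 0 - (evalInf C).map Complex.ofReal))).det ≠ 0) ∧
      ∀ t ∈ Set.Icc (0 : ℝ) 1, (1 - (evalM C 0 + Q) *
        (loopShift Q ((evalInf P).map Complex.ofReal) + (t : ℂ) •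
          (K₀ - loopShift Q ((evalInf P).map Complex.ofReal)))).det ≠ 0 := by
  have hQdet := hQ.det_pos.ne'
  have hloop := hasStableInverse_loopMatrix_add_iff (hC.isNI.isHermitian_evalInf.add hQ.1)
    (isHermitian_loopShift hQ.1 hP.isHermitian_evalInf)
    hC.isNI.halfPlaneNI_evalM_sub_evalInf (hP.halfPlaneNI_loopShift_sub_loopShift hQ.1 hQP)
    (hC.tendsto_evalM_zero.sub_const _) (hK₀.sub_const _)
    (fun ω _ => (continuousAt_evalM (hC.not_hasPole (jw_re ω).ge)).sub continuousAt_const)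
    fun ω hω u hu => hC.form_jw_smul_evalM_sub_evalInf_re_pos hω hu
  simp only [add_sub_cancel, add_right_comm _ Q,
    det_one_sub_loopShift_mul_add_ne_zero_iff hQdet hQP.det_pos.ne'] at hloop
  rw [feedbackStable_iff_hasStableInverse, ← hasStableInverse_loopMatrix_add_loopShift_iff hQdet
    fun l hl => hP.eventually_det_inv_add_evalM_ne_zero hQP hl]
  exact hloop

theorem feedbackStable_iff_eigsRealAndLT (hP : IsNI P) (hC : IsSNI C) (hQ : Q.PosDef)
    (hQP : (Q⁻¹ + (evalInf P).map Complex.ofReal).PosDef) :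
    FeedbackStable P C ↔
      (1 - (evalInf P).map Complex.ofReal * (evalInf C).map Complex.ofReal).det ≠ 0 ∧
      eigsRealAndLT ((1 - (evalInf P).map Complex.ofReal * (evalInf C).map Complex.ofReal)⁻¹ *
        ((evalInf P).map Complex.ofReal * evalM C 0 - 1)) 0 ∧
      ∃ L, Tendsto (fun s => (1 + Q * (evalInf P).map Complex.ofReal) *
        (1 - evalM C s * (evalInf P).map Complex.ofReal)⁻¹ * (evalM C s * evalM P s - 1) *
          (1 + Q * evalM P s)⁻¹) (𝓝[≠] 0) (𝓝 L) ∧ eigsRealAndLT L 0 := by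
  obtain ⟨K₀, hK₀⟩ := hP.halfPlaneNI_evalM_sub_evalInf.exists_tendsto_loopShift hQP
  simp only [add_sub_cancel] at hK₀
  have hc := hC.tendsto_evalM_zero
  have hE := hC.isNI.halfPlaneNI_evalM_sub_evalInf.posSemidef_of_tendsto_zero (hc.sub_const _)
  have hF := (hP.halfPlaneNI_loopShift_sub_loopShift hQ.1 hQP).posSemidef_of_tendsto_zero
    (hK₀.sub_const _)
  have hA₀ : (evalM C 0).IsHermitian := by simpa using hC.isNI.isHermitian_evalInf.add hE.1
  rw [feedbackStable_iff_det_ne_zero hP hC hQ hQP hK₀, ← and_assoc,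
    det_ne_zero_and_eigsRealAndLT_iff hP.isHermitian_evalInf hC.isNI.isHermitian_evalInf hE]
  refine and_congr_right fun hsegment => (exists_tendsto_eigsRealAndLT_iff hQ
    hP.isHermitian_evalInf hQP.det_pos.ne' hA₀ hF (hP.eventually_det_inv_add_evalM_ne_zero hQP
      (isStabilityFilter_nhdsNE le_rfl)) hc hK₀ ?_).symm
  rw [det_one_sub_mul_comm]
  simpa using hsegment 1 ⟨zero_le_one, le_rfl⟩

end Plant

section RealMatrix

open scoped MatrixOrder in
theorem exists_isUnit_eq_conjTranspose_mul_self {m : Type*} [Fintype m] [DecidableEq m]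
    {A : Matrix m m ℝ} (hA : A.PosDef) : ∃ R, IsUnit R ∧ A = Rᴴ * R :=
  CStarAlgebra.isStrictlyPositive_iff_eq_star_mul_self.1 hA.isStrictlyPositive

theorem map_ringHom_inv {m K L : Type*} [Fintype m] [DecidableEq m] [Field K] [Field L]
    (f : K →+* L) (A : Matrix m m K) : A⁻¹.map f = (A.map f)⁻¹ := by
  rw [inv_def, inv_def, Ring.inverse_eq_inv', Ring.inverse_eq_inv', ← RingHom.mapMatrix_apply,
    ← RingHom.mapMatrix_apply, ← RingHom.map_adjugate, ← RingHom.map_det, ← map_inv₀]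
  ext i j
  simp

theorem posDef_map_ofReal {m : Type*} [Finite m] {A : Matrix m m ℝ} (hA : A.PosDef) :
    (A.map Complex.ofReal).PosDef := by
  classical
  have := Fintype.ofFinite m
  obtain ⟨R, hR, rfl⟩ := exists_isUnit_eq_conjTranspose_mul_self hA
  have hunit : IsUnit (R.map Complex.ofReal) := hR.map Complex.ofRealHom.mapMatrix
  have hmap : (Rᴴ * R).map Complex.ofReal = (R.map Complex.ofReal)ᴴ * R.map Complex.ofReal := by
    ext i j
    simp [Matrix.mul_apply]
  rw [hmap]
  exact .conjTranspose_mul_self _ (mulVec_injective_of_isUnit hunit)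

theorem evalM_ofReal (G : Matrix (Fin n) (Fin n) (RatFunc ℝ)) (x : ℝ) :
    evalM G x = (evalR G x).map Complex.ofReal := by
  ext i j
  change _ / _ = ((_ / _ : ℝ) : ℂ)
  rw [Complex.ofReal_div]
  exact congrArg₂ _ (eval₂_at_apply (algebraMap ℝ ℂ) x) (eval₂_at_apply (algebraMap ℝ ℂ) x)

theorem maxEigLT_mul_iff {A B : Matrix (Fin n) (Fin n) ℝ} {c : ℝ} :
    maxEigLT (A * B) c ↔ eigsRealAndLT (A.map Complex.ofReal * B.map Complex.ofReal) c := by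
  change eigsRealAndLT (Complex.ofRealHom.mapMatrix _) c ↔ _
  rw [map_mul]
  rfl

theorem det_one_sub_mul_map_ofReal_ne_zero_iff {m : Type*} [Fintype m] [DecidableEq m]
    {A B : Matrix m m ℝ} :
    (1 - A.map Complex.ofReal * B.map Complex.ofReal).det ≠ 0 ↔ (1 - A * B).det ≠ 0 := by
  have hmap : Complex.ofRealHom.mapMatrix (1 - A * B) =
      1 - A.map Complex.ofReal * B.map Complex.ofReal := by
    rw [map_sub, map_one, map_mul]
    rfl
  rw [← hmap, ← RingHom.map_det, Complex.ofRealHom_eq_coe, Complex.ofReal_ne_zero]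

theorem maxEigLT_inv_one_sub_mul_iff {A B D : Matrix (Fin n) (Fin n) ℝ} {c : ℝ} :
    maxEigLT ((1 - D * A)⁻¹ * (D * B - 1)) c ↔
      eigsRealAndLT ((1 - D.map Complex.ofReal * A.map Complex.ofReal)⁻¹ *
        (D.map Complex.ofReal * B.map Complex.ofReal - 1)) c := by
  change eigsRealAndLT (Complex.ofRealHom.mapMatrix _) c ↔ _
  rw [map_mul, RingHom.mapMatrix_apply, map_ringHom_inv, ← RingHom.mapMatrix_apply, map_sub,
    map_sub, map_mul, map_mul, map_one]
  rfl

end RealMatrix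

/-- feedback stability of an NI plant (possibly with a pole at
the origin) with an SNI controller. -/
theorem feedback_stability_iff_origin_pole {n : ℕ} (P C : Matrix (Fin n) (Fin n) (RatFunc ℝ))
    (Ψ : Matrix (Fin n) (Fin n) ℝ)
    (hP : IsNI P) (hC : IsSNI C)
    (hΨsym : Ψᵀ = Ψ) (hΨneg : (-Ψ).PosDef)
    (hgain : maxEigLT (evalInf P * Ψ) 1) :
    FeedbackStable P C ↔
      ((1 - evalInf P * evalInf C).det ≠ 0 ∧
       maxEigLT ((1 - evalInf P * evalInf C)⁻¹ * (evalInf P * evalR C 0 - 1)) 0 ∧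
       ∃ L : Matrix (Fin n) (Fin n) ℂ,
         Filter.Tendsto
           (fun s : ℂ =>
             ((1 : Matrix (Fin n) (Fin n) ℂ) -
                 Ψ.map Complex.ofReal * (evalInf P).map Complex.ofReal) *
               (1 - evalM C s * (evalInf P).map Complex.ofReal)⁻¹ *
               (evalM C s * evalM P s - 1) *
               (1 - Ψ.map Complex.ofReal * evalM P s)⁻¹)
           (𝓝[≠] (0 : ℂ)) (𝓝 L) ∧
         eigsRealAndLT L 0) := by
  have hposDef : (-Ψ.map Complex.ofReal).PosDef := by
    simpa [Matrix.map_neg] using posDef_map_ofReal hΨneg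
  have hgap : ((-Ψ.map Complex.ofReal)⁻¹ + (evalInf P).map Complex.ofReal).PosDef := by
    refine posDef_inv_add_of_eigsRealAndLT hP.isHermitian_evalInf hposDef ?_
    rwa [neg_neg, ← maxEigLT_mul_iff]
  rw [feedbackStable_iff_eigsRealAndLT hP hC hposDef hgap, maxEigLT_inv_one_sub_mul_iff,
    det_one_sub_mul_map_ofReal_ne_zero_iff, ← evalM_ofReal, Complex.ofReal_zero]
  simp only [Matrix.neg_mul, ← sub_eq_add_neg]

end NIControl
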